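/- arXiv:2206.00552 — 5 statements merged into one kernel-verified Lean document; each statement's English description precedes it below -/
import Mathlib

section
/- Let $S$ be a Cohen-Macaulay homogeneous affine semigroup with minimal generating set $G_S = \{a_1, \dots, a_s\} \subseteq \mathbb{N}^n$, and let $R = \Bbbk[S]$ with canonical ideal $I_R$ minimally generated by monomials $x^{v_1}, \dots, x^{v_r}$, where $V = \{v_1, \dots, v_r\} \subseteq S$. Set $S - V = \{a \in \mathbb{Z}S : a + v \in S \text{ for all } v \in V\}$. Then $R$ is nearly Gorenstein if and only if for every $a_i \in G_S$ there exist $v \in V$ and $u \in S - V$ with $a_i = u + v$. -/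
noncomputable section
noncomputable section

/-- The trace `I·I⁻¹` of an ideal `I`, pulled back to `R` from the total fraction ring:
`tr(I) = {r ∈ R | r ∈ span{ x·y | x ∈ I, y ∈ I⁻¹ }}`. -/
def traceIdeal {R : Type*} [CommRing R] (I : Ideal R) : Ideal R :=
  Submodule.comap (Algebra.linearMap R (FractionRing R))
    (Submodule.span R {z : FractionRing R | ∃ x ∈ I, ∃ y : FractionRing R,
      (∀ w ∈ I, ∃ r : R, y * algebraMap R (FractionRing R) w =
        algebraMap R (FractionRing R) r) ∧
      z = algebraMap R (FractionRing R) x * y})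

/-- `l` is a regular sequence on `R`. -/
def IsRegularSeq {R : Type*} [CommRing R] (l : List R) : Prop :=
  (∀ (i : ℕ) (hi : i < l.length) (x : R),
      x * l[i]'hi ∈ Ideal.span {y | y ∈ l.take i} → x ∈ Ideal.span {y | y ∈ l.take i}) ∧
    Ideal.span {y | y ∈ l} ≠ ⊤

/-- `R` is Cohen-Macaulay with respect to the (maximal) ideal `m`: there is a regular
sequence inside `m` whose length is the Krull dimension of `R`. -/
def IsCMWrt {R : Type*} [CommRing R] (m : Ideal R) : Prop :=
  ∃ l : List R, (∀ x ∈ l, x ∈ m) ∧ IsRegularSeq l ∧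
    (l.length : WithBot ℕ∞) = ringKrullDim R

/-- The graded maximal ideal of the affine semigroup ring `k[S]`, generated by all
monomials `x^s`, `0 ≠ s ∈ S`. -/
def sgMaxIdeal (k : Type*) [Field k] {n : ℕ} (S : AddSubmonoid (Fin n → ℕ)) :
    Ideal (AddMonoidAlgebra k ↥S) :=
  Ideal.span {x | ∃ s : ↥S, s ≠ 0 ∧ x = AddMonoidAlgebra.single s (1 : k)}

/-- Coercion `ℕⁿ → ℤⁿ`. -/
def natVecToInt {n : ℕ} (a : Fin n → ℕ) : Fin n → ℤ := fun i => (a i : ℤ)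

/-- `u ∈ S - V = {a ∈ ℤS : a + v ∈ S for all v ∈ V}`. -/
def MemSminusV {n : ℕ} (S : AddSubmonoid (Fin n → ℕ)) (V : Finset (Fin n → ℕ))
    (u : Fin n → ℤ) : Prop :=
  u ∈ AddSubgroup.closure (natVecToInt '' (S : Set (Fin n → ℕ))) ∧
    ∀ v ∈ V, ∃ s ∈ S, u + natVecToInt v = natVecToInt s

/-! If an ideal `I` is generated by a set `s` of non-zero-divisors, then `v·I⁻¹ = (v) : I` for every
`v ∈ s`, so the trace `I·I⁻¹` is the sum of the colon ideals `(v) : I`. For monomials `x ^ v`,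
`v ∈ V`, in the algebra of a cancellative monoid these colon ideals are again monomial: `x ^ m`
lies in `(x ^ v) : I` iff `m - v ∈ S - V`. So the trace is spanned by the monomials with exponent
in `V + (S - V)`, and it contains the graded maximal ideal iff it contains the monomials of a
generating set of `S`. -/

section Trace

variable {R : Type*} [CommRing R]

theorem mem_one_div_coeSubmodule_iff {K : Type*} [CommRing K] [Algebra R K] {I : Ideal R} {y : K} :
    y ∈ 1 / IsLocalization.coeSubmodule K I ↔
      ∀ w ∈ I, ∃ r : R, algebraMap R K r = y * algebraMap R K w := by
  simp [Submodule.mem_div_iff_forall_mul_mem, IsLocalization.coeSubmodule, Submodule.mem_one]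

theorem traceIdeal_eq_comap_mul_one_div (I : Ideal R) :
    traceIdeal I = Submodule.comap (Algebra.linearMap R (FractionRing R))
      (IsLocalization.coeSubmodule (FractionRing R) I *
        (1 / IsLocalization.coeSubmodule (FractionRing R) I)) := by
  rw [traceIdeal, Submodule.mul_eq_span_mul_set]
  congr 2
  ext z
  simp [Set.mem_mul, mem_one_div_coeSubmodule_iff, eq_comm]

theorem span_singleton_mul_one_div_coeSubmodule (K : Type*) [CommRing K] [Algebra R K]
    [IsFractionRing R K] {I : Ideal R} {v : R} (hvI : v ∈ I) (hv : v ∈ nonZeroDivisors R) :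
    Submodule.span R {algebraMap R K v} * (1 / IsLocalization.coeSubmodule K I) =
      IsLocalization.coeSubmodule K ((Ideal.span {v}).colon I) := by
  ext z
  simp only [Submodule.mem_span_singleton_mul, mem_one_div_coeSubmodule_iff,
    IsLocalization.mem_coeSubmodule, Submodule.mem_colon, SetLike.mem_coe,
    Ideal.mem_span_singleton, smul_eq_mul]
  constructor
  · rintro ⟨y, hy, rfl⟩
    obtain ⟨r, hr⟩ := hy v hvI
    refine ⟨r, fun w hw => ?_, by rw [hr, mul_comm]⟩
    obtain ⟨t, ht⟩ := hy w hw
    refine ⟨t, IsFractionRing.injective R K ?_⟩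
    rw [map_mul, map_mul, hr, ht]
    ring
  · rintro ⟨r, hr, rfl⟩
    refine ⟨IsLocalization.mk' K r ⟨v, hv⟩, fun w hw => ?_, IsLocalization.mk'_spec' K r ⟨v, hv⟩⟩
    obtain ⟨t, ht⟩ := hr w hw
    refine ⟨t, ?_⟩
    rw [mul_comm, IsLocalization.mul_mk'_eq_mk'_of_mul, mul_comm w, ht, eq_comm]
    exact IsLocalization.mk'_mul_cancel_left t ⟨v, hv⟩

theorem traceIdeal_span_eq_iSup_colon {s : Set R} (hs : s ⊆ nonZeroDivisors R) :
    traceIdeal (Ideal.span s) = ⨆ v ∈ s, (Ideal.span {v}).colon s := by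
  set K := FractionRing R
  set I := Ideal.span s
  have hmul : IsLocalization.coeSubmodule K I * (1 / IsLocalization.coeSubmodule K I) =
      IsLocalization.coeSubmodule K (⨆ v ∈ s, (Ideal.span {v}).colon s) := by
    calc IsLocalization.coeSubmodule K I * (1 / IsLocalization.coeSubmodule K I)
      _ = ⨆ v ∈ s, Submodule.span R {algebraMap R K v} *
            (1 / IsLocalization.coeSubmodule K I) := by
        rw [IsLocalization.coeSubmodule_span, Submodule.span_eq_iSup_of_singleton_spans,
          iSup_image]
        simp only [Submodule.iSup_mul]
      _ = ⨆ v ∈ s, IsLocalization.coeSubmodule K ((Ideal.span {v}).colon s) := by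
        refine biSup_congr fun v hv => ?_
        rw [span_singleton_mul_one_div_coeSubmodule K (Ideal.subset_span hv) (hs hv),
          Ideal.colon_span]
      _ = IsLocalization.coeSubmodule K (⨆ v ∈ s, (Ideal.span {v}).colon s) := by
        simp only [IsLocalization.coeSubmodule, Submodule.map_iSup]
  rw [traceIdeal_eq_comap_mul_one_div, hmul]
  exact Submodule.comap_map_eq_of_injective (IsFractionRing.injective R K) _

end Trace

/-- The exponent set `V + (S - V)` of a subset `V` of a monoid `S`, where `S - V` consists of the
differences `u` with `u + w ∈ S` for all `w ∈ V`. The condition `m - v + w ∈ S` is written as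
`m + w ∈ S + v`, so that no group of differences is needed. -/
def traceExponents {S : Type*} [Add S] (V : Set S) : Set S :=
  {m | ∃ v ∈ V, ∀ w ∈ V, ∃ d, m + w = d + v}

section Monomial

variable {k S : Type*}

theorem add_mem_traceExponents [AddSemigroup S] {V : Set S} {m : S} (d : S)
    (hm : m ∈ traceExponents V) : d + m ∈ traceExponents V := by
  obtain ⟨v, hv, h⟩ := hm
  refine ⟨v, hv, fun w hw => ?_⟩
  obtain ⟨t, ht⟩ := h w hw
  exact ⟨d + t, by rw [add_assoc, ht, add_assoc]⟩

theorem of'_mem_span_of'_image_iff [Semiring k] [Nontrivial k] [AddMonoid S] {T : Set S} {m : S} :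
    AddMonoidAlgebra.of' k S m ∈ Ideal.span (AddMonoidAlgebra.of' k S '' T) ↔
      ∃ t ∈ T, ∃ d, m = d + t := by
  simp [AddMonoidAlgebra.mem_ideal_span_of'_image, AddMonoidAlgebra.of', Finsupp.support_single]

theorem of'_mem_nonZeroDivisors [CommSemiring k] [AddCommMonoid S] [IsCancelAdd S] (m : S) :
    AddMonoidAlgebra.of' k S m ∈ nonZeroDivisors (AddMonoidAlgebra k S) := by
  refine mem_nonZeroDivisors_iff_left.2 fun f hf => ?_
  rw [← AddMonoidAlgebra.of'_mul_divOf m f, hf, AddMonoidAlgebra.zero_divOf]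

theorem colon_of'_image [CommSemiring k] [AddCommMonoid S] [IsCancelAdd S] (v : S) (W : Set S) :
    (Ideal.span {AddMonoidAlgebra.of' k S v}).colon (AddMonoidAlgebra.of' k S '' W) =
      Ideal.span (AddMonoidAlgebra.of' k S '' {m | ∀ w ∈ W, ∃ d, m + w = d + v}) := by
  ext f
  have hmul (w : S) : f * AddMonoidAlgebra.of' k S w ∈ Ideal.span {AddMonoidAlgebra.of' k S v} ↔
      ∀ m ∈ f.coeff.support, ∃ d, m + w = d + v := by
    rw [← Set.image_singleton, AddMonoidAlgebra.mem_ideal_span_of'_image,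
      AddMonoidAlgebra.of'_apply,
      AddMonoidAlgebra.support_coeff_mul_single f 1 (by simp) w]
    simp
  simp only [Submodule.mem_colon, Set.forall_mem_image, smul_eq_mul, hmul,
    AddMonoidAlgebra.mem_ideal_span_of'_image, Set.mem_ofPred_eq]
  constructor
  · exact fun h m hm => ⟨m, fun w hw => h hw m hm, 0, (zero_add m).symm⟩
  · intro h w hw m hm
    obtain ⟨m', hm', d, rfl⟩ := h m hm
    obtain ⟨t, ht⟩ := hm' w hw
    exact ⟨d + t, by rw [add_assoc, ht, add_assoc]⟩

theorem traceIdeal_span_of'_image [CommRing k] [AddCommMonoid S] [IsCancelAdd S] (V : Set S) :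
    traceIdeal (Ideal.span (AddMonoidAlgebra.of' k S '' V)) =
      Ideal.span (AddMonoidAlgebra.of' k S '' traceExponents V) := by
  have hV : AddMonoidAlgebra.of' k S '' V ⊆ nonZeroDivisors (AddMonoidAlgebra k S) :=
    Set.image_subset_iff.2 fun v _ => of'_mem_nonZeroDivisors v
  have hunion : traceExponents V = ⋃ v ∈ V, {m | ∀ w ∈ V, ∃ d, m + w = d + v} := by
    ext m
    simp [traceExponents]
  rw [traceIdeal_span_eq_iSup_colon hV, iSup_image, hunion]
  simp only [colon_of'_image, Set.image_iUnion, Ideal.span, Submodule.span_iUnion₂]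

theorem of'_mem_traceIdeal_iff [CommRing k] [Nontrivial k] [AddCommMonoid S] [IsCancelAdd S]
    {V : Set S} {m : S} :
    AddMonoidAlgebra.of' k S m ∈ traceIdeal (Ideal.span (AddMonoidAlgebra.of' k S '' V)) ↔
      m ∈ traceExponents V := by
  rw [traceIdeal_span_of'_image, of'_mem_span_of'_image_iff]
  constructor
  · rintro ⟨t, ht, d, rfl⟩
    exact add_mem_traceExponents d ht
  · exact fun hm => ⟨m, hm, 0, (zero_add m).symm⟩

theorem exists_eq_add_of_mem_closure [AddMonoid S] {G : Set S} {a : S}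
    (ha : a ∈ AddSubmonoid.closure G) (ha0 : a ≠ 0) :
    ∃ g ∈ G, ∃ d ∈ AddSubmonoid.closure G, a = d + g := by
  induction ha using AddSubmonoid.closure_induction_right with
  | zero => exact absurd rfl ha0
  | add_right d hd g hg _ => exact ⟨g, hg, d, hd, rfl⟩

end Monomial

section AffineSemigroup

variable {n : ℕ} {S : AddSubmonoid (Fin n → ℕ)}

theorem sgMaxIdeal_eq_span (k : Type*) [Field k] {G : Set (Fin n → ℕ)}
    (hG : AddSubmonoid.closure G = S) (hG0 : 0 ∉ G) :
    sgMaxIdeal k S = Ideal.span (AddMonoidAlgebra.of' k S '' {g | ↑g ∈ G}) := by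
  subst hG
  refine le_antisymm (Ideal.span_le.2 ?_) (Ideal.span_le.2 ?_)
  · rintro _ ⟨s, hs, rfl⟩
    obtain ⟨g, hg, d, hd, hsum⟩ := exists_eq_add_of_mem_closure s.2 (Subtype.coe_ne_coe.2 hs)
    exact of'_mem_span_of'_image_iff.2
      ⟨⟨g, AddSubmonoid.subset_closure hg⟩, hg, ⟨d, hd⟩, Subtype.ext hsum⟩
  · rintro _ ⟨g, hg, rfl⟩
    exact Ideal.subset_span ⟨g, fun hg0 => hG0 (by simpa [hg0] using hg), rfl⟩

theorem natVecToInt_add (a b : Fin n → ℕ) :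
    natVecToInt (a + b) = natVecToInt a + natVecToInt b := by
  ext i
  simp [natVecToInt]

theorem natVecToInt_injective : Function.Injective (natVecToInt (n := n)) := fun _ _ h =>
  funext fun i => Int.ofNat_injective (congrFun h i)

theorem memSminusV_sub_iff {V : Finset (Fin n → ℕ)} {g v : Fin n → ℕ} (hg : g ∈ S) (hv : v ∈ S) :
    MemSminusV S V (natVecToInt g - natVecToInt v) ↔ ∀ w ∈ V, ∃ d ∈ S, g + w = d + v := by
  have hmem : natVecToInt g - natVecToInt v ∈
      AddSubgroup.closure (natVecToInt '' (S : Set (Fin n → ℕ))) :=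
    sub_mem (AddSubgroup.subset_closure ⟨g, hg, rfl⟩) (AddSubgroup.subset_closure ⟨v, hv, rfl⟩)
  have hshift (w d : Fin n → ℕ) :
      natVecToInt g - natVecToInt v + natVecToInt w = natVecToInt d ↔ g + w = d + v := by
    rw [sub_add_eq_add_sub, sub_eq_iff_eq_add, ← natVecToInt_add, ← natVecToInt_add,
      natVecToInt_injective.eq_iff]
  simp only [MemSminusV, hmem, true_and, hshift]

theorem mem_traceExponents_iff_exists_memSminusV {V : Finset (Fin n → ℕ)}
    (hVS : ∀ v ∈ V, v ∈ S) (g : S) :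
    g ∈ traceExponents {v : S | ↑v ∈ V} ↔ ∃ v ∈ V, ∃ u : Fin n → ℤ, MemSminusV S V u ∧
      natVecToInt g = u + natVecToInt v := by
  have hsub (v : Fin n → ℕ) : (∃ u, MemSminusV S V u ∧ natVecToInt g = u + natVecToInt v) ↔
      MemSminusV S V (natVecToInt g - natVecToInt v) := by
    simp [← sub_eq_iff_eq_add]
  simp only [hsub]
  constructor
  · rintro ⟨v, hv, h⟩
    refine ⟨v, hv, (memSminusV_sub_iff g.2 v.2).2 fun w hw => ?_⟩
    obtain ⟨d, hd⟩ := h ⟨w, hVS w hw⟩ hw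
    exact ⟨d, d.2, congrArg Subtype.val hd⟩
  · rintro ⟨v, hv, h⟩
    refine ⟨⟨v, hVS v hv⟩, hv, fun w hw => ?_⟩
    obtain ⟨d, hd, hsum⟩ := (memSminusV_sub_iff g.2 (hVS v hv)).1 h w hw
    exact ⟨⟨d, hd⟩, Subtype.ext hsum⟩

end AffineSemigroup

theorem nearlyGorenstein_iff_semigroup_condition_general
    (k : Type*) [Field k] {n : ℕ} (S : AddSubmonoid (Fin n → ℕ))
    (G : Set (Fin n → ℕ)) (hGgen : AddSubmonoid.closure G = S) (hG0 : 0 ∉ G)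
    (V : Finset (Fin n → ℕ)) (hVS : ∀ v ∈ V, v ∈ S)
    (I_R : Ideal (AddMonoidAlgebra k ↥S))
    (hIR : I_R = Ideal.span
      {x | ∃ v, ∃ hv : v ∈ V, x = AddMonoidAlgebra.single (⟨v, hVS v hv⟩ : ↥S) (1 : k)}) :
    sgMaxIdeal k S ≤ traceIdeal I_R ↔
      ∀ g ∈ G, ∃ v ∈ V, ∃ u : Fin n → ℤ, MemSminusV S V u ∧
        natVecToInt g = u + natVecToInt v := by
  have hI : I_R = Ideal.span (AddMonoidAlgebra.of' k S '' {v | ↑v ∈ V}) := by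
    rw [hIR]
    congr 1
    ext x
    constructor
    · rintro ⟨v, hv, rfl⟩
      exact ⟨⟨v, hVS v hv⟩, hv, rfl⟩
    · rintro ⟨v, hv, rfl⟩
      exact ⟨v, hv, rfl⟩
  have hGS : ∀ g ∈ G, g ∈ S := fun g hg => hGgen ▸ AddSubmonoid.subset_closure hg
  calc sgMaxIdeal k S ≤ traceIdeal I_R
    _ ↔ ∀ g : S, ↑g ∈ G → g ∈ traceExponents {v : S | ↑v ∈ V} := by
      rw [sgMaxIdeal_eq_span k hGgen hG0, hI, Ideal.span_le, Set.image_subset_iff]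
      exact forall₂_congr fun g _ => of'_mem_traceIdeal_iff
    _ ↔ ∀ g ∈ G, ∃ v ∈ V, ∃ u : Fin n → ℤ, MemSminusV S V u ∧
          natVecToInt g = u + natVecToInt v := by
      simp only [mem_traceExponents_iff_exists_memSminusV hVS]
      exact ⟨fun h g hg => h ⟨g, hGS g hg⟩ hg, fun h g hg => h g hg⟩

/-- nearly Gorensteinness of homogeneous affine semigroup rings,
combinatorially: let `S ⊆ ℕⁿ` be a Cohen-Macaulay homogeneous affine semigroup with
minimal generating set `G`, and let the canonical ideal of `R = k[S]` be minimally
generated by the monomials `x^v`, `v ∈ V ⊆ S`.  Then `R` is nearly Gorenstein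
(i.e. `m ⊆ tr(ω_R) = I_R·I_R⁻¹`) iff every `a ∈ G` can be written as `u + v` with
`v ∈ V` and `u ∈ S - V`. -/
theorem nearlyGorenstein_iff_semigroup_condition
    (k : Type*) [Field k] {n : ℕ} (S : AddSubmonoid (Fin n → ℕ))
    -- `S` is a homogeneous affine semigroup, minimally generated by `G`,
    -- all of whose members have degree one:
    (G : Finset (Fin n → ℕ)) (hGgen : AddSubmonoid.closure ↑G = S)
    (hGmin : ∀ g ∈ G, g ∉ AddSubmonoid.closure ↑(G.erase g))
    (δ : (Fin n → ℕ) → ℕ) (hδadd : ∀ a ∈ S, ∀ b ∈ S, δ (a + b) = δ a + δ b)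
    (hδ0 : δ 0 = 0) (hδG : ∀ g ∈ G, δ g = 1)
    -- `R = k[S]` is Cohen-Macaulay:
    (hCM : IsCMWrt (sgMaxIdeal k S))
    -- the canonical ideal `I_R` of `R`, minimally generated by the monomials
    -- `x^v`, `v ∈ V`:
    (V : Finset (Fin n → ℕ)) (hVS : ∀ v ∈ V, v ∈ S) (hVne : V.Nonempty)
    (I_R : Ideal (AddMonoidAlgebra k ↥S))
    (hIR : I_R = Ideal.span
      {x | ∃ v, ∃ hv : v ∈ V, x = AddMonoidAlgebra.single (⟨v, hVS v hv⟩ : ↥S) (1 : k)})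
    (hVmin : ∀ v, ∀ hv : v ∈ V,
      AddMonoidAlgebra.single (⟨v, hVS v hv⟩ : ↥S) (1 : k) ∉ Ideal.span
        {x | ∃ w, ∃ hw : w ∈ V.erase v,
          x = AddMonoidAlgebra.single (⟨w, hVS w (Finset.mem_of_mem_erase hw)⟩ : ↥S) (1 : k)}) :
    -- nearly Gorenstein ↔ the combinatorial condition:
    sgMaxIdeal k S ≤ traceIdeal I_R ↔
      ∀ g ∈ G, ∃ v ∈ V, ∃ u : Fin n → ℤ, MemSminusV S V u ∧
        natVecToInt g = u + natVecToInt v := by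
  exact nearlyGorenstein_iff_semigroup_condition_general k S G hGgen
    (fun h0 => hGmin 0 h0 (zero_mem _)) V hVS I_R hIR

end
end
end

section
/- Let $S$ be a Cohen-Macaulay homogeneous affine semigroup with canonical module generated in degrees given by the set $V \subseteq S$, and let $V_{\min}$ be the elements of $V$ of minimal degree. Let $E$ be the set of extremal rays of the cone $\mathbb{R}_{\geq 0} S$. If $|V_{\min}| = 1$ and $|V| \geq 2$, then there exists an extremal ray generator $a \in E \cap G_S$ that cannot be written as $v + u$ with $v \in V_{\min}$ and $u \in S - V$. -/
noncomputable section
noncomputable section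

/-- Coercion `ℕⁿ → ℝⁿ`. -/
def natVecToReal {n : ℕ} (a : Fin n → ℕ) : Fin n → ℝ := fun i => (a i : ℝ)

/-- `F` is a face of the cone `C`. -/
def IsFaceOfCone {d : ℕ} (C F : Set (Fin d → ℝ)) : Prop :=
  F ⊆ C ∧ (∀ r : ℝ, 0 ≤ r → ∀ y ∈ F, r • y ∈ F) ∧
    ∀ x ∈ C, ∀ y ∈ C, (x + y ∈ F ↔ x ∈ F ∧ y ∈ F)

/-- An extremal ray of `C` is a one-dimensional face of `C`. -/
def IsExtremalRayOfCone {d : ℕ} (C l : Set (Fin d → ℝ)) : Prop :=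
  IsFaceOfCone C l ∧ Module.finrank ℝ (Submodule.span ℝ l) = 1

/-!
Let `v₀` be the element of `V_min` and `v₁ ≠ v₀` another element of `V`, so `deg v₀ ≤ deg v₁`.
Suppose every generator `e` of an extremal ray were `v₀ + u` with `u ∈ S - V`. Then
`v₁ - v₀ + e = v₁ + u ∈ S` for all such `e`, so `I = {s ∈ S | v₁ - v₀ + s ∈ S}` is an ideal of `S`
containing all the `e`. Some positive multiple of each `g ∈ G` is a sum of such `e`, so `S \ I` is
bounded along each `g`. If `v₁ - v₀ ∉ S`, there is thus an `s ∈ S \ I` with `s + g ∈ I` for all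
`g ∈ G`, and `a = v₁ - v₀ + s` is an element of `ℤS \ S` of degree `≥ 0` with `a + (S \ {0}) ⊆ S`.

No such `a` exists when `𝕜[S]` is Cohen-Macaulay: in dimension at least two because the depth is
at least two, and otherwise because `S ≅ ℕ` or `S = 0`. Hence `v₁ ∈ v₀ + S`, against the minimality
of the generator `x ^ v₁`.
-/

open scoped NNReal Pointwise

namespace IsRegularSeq

variable {R : Type*} [CommRing R] {l : List R}

theorem head_mem_nonZeroDivisors {f : R} (hl : IsRegularSeq (f :: l)) : f ∈ nonZeroDivisors R :=
  mem_nonZeroDivisors_iff_right.2 fun x hx => by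
    simpa using hl.1 0 (by simp) x (by simp [hx])

theorem dvd_of_dvd_mul {f g x : R} (hl : IsRegularSeq (f :: g :: l)) (h : f ∣ x * g) : f ∣ x := by
  simpa [Ideal.mem_span_singleton] using
    hl.1 1 (by simp) x (by simpa [Ideal.mem_span_singleton] using h)

theorem dvd_of_forall_dvd_mul (hl : IsRegularSeq l) (hlen : 2 ≤ l.length) {a b : R}
    (hb : b ∈ nonZeroDivisors R) (h : ∀ f ∈ l, b ∣ f * a) : b ∣ a := by
  match l, hlen with
  | f :: g :: l, _ =>
    obtain ⟨x, hx⟩ := h f (by simp)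
    obtain ⟨y, hy⟩ := h g (by simp)
    have hxy : x * g = f * y := (mul_cancel_left_mem_nonZeroDivisors hb).1 (by
      linear_combination f * hy - g * hx)
    obtain ⟨z, rfl⟩ := hl.dvd_of_dvd_mul (Dvd.intro y hxy.symm)
    exact ⟨z, (mul_cancel_left_mem_nonZeroDivisors hl.head_mem_nonZeroDivisors).1 (by
      linear_combination hx)⟩

end IsRegularSeq

section MonoidAlgebra

open AddMonoidAlgebra

theorem single_one_dvd_single_one_iff {k M : Type*} [CommSemiring k] [Nontrivial k]
    [AddCommMonoid M] {p q : M} : (single q 1 : k[M]) ∣ single p 1 ↔ ∃ t, p = q + t := by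
  refine ⟨fun h => ?_, fun ⟨t, ht⟩ => ⟨single t 1, by simp [single_mul_single, ht]⟩⟩
  have hmem : (single p 1 : k[M]) ∈ Ideal.span (of' k M '' {q}) := by
    rwa [Set.image_singleton, Ideal.mem_span_singleton]
  obtain ⟨_, rfl, t, ht⟩ := mem_ideal_span_of'_image.1 hmem p (by simp)
  exact ⟨t, ht.trans (add_comm _ _)⟩

theorem mapDomainRingHom_surjective (k : Type*) {M N : Type*} [Semiring k] [AddMonoid M]
    [AddMonoid N] {d : M →+ N} (hd : Function.Surjective d) :
    Function.Surjective (mapDomainRingHom k d) := fun x => by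
  induction x using induction_linear with
  | zero => exact ⟨0, map_zero _⟩
  | add x y hx hy =>
    obtain ⟨x', rfl⟩ := hx
    obtain ⟨y', rfl⟩ := hy
    exact ⟨x' + y', map_add _ _ _⟩
  | single s c =>
    obtain ⟨s', rfl⟩ := hd s
    exact ⟨single s' c, by simp⟩

theorem ringKrullDim_addMonoidAlgebra_succ_le (k : Type*) {M N : Type*} [CommRing k]
    [Nontrivial k] [AddCommMonoid M] [AddCommMonoid N] [NoZeroDivisors k[M]] {d : M →+ N}
    (hsurj : Function.Surjective d) (hinj : ¬ Function.Injective d) :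
    ringKrullDim k[N] + 1 ≤ ringKrullDim k[M] := by
  obtain ⟨g, h, hd, hne⟩ := Function.not_injective_iff.1 hinj
  have hker : mapDomainRingHom k d (single g 1 - single h 1) = 0 := by
    rw [map_sub]
    simp [hd]
  have hzero : (single g 1 - single h 1 : k[M]) ≠ 0 :=
    sub_ne_zero.2 fun H => hne (of_injective (R := k) H)
  exact ringKrullDim_succ_le_of_surjective _ (mapDomainRingHom_surjective k hsurj)
    (mem_nonZeroDivisors_of_ne_zero hzero) hker

theorem two_le_ringKrullDim_addMonoidAlgebra (k : Type*) {M : Type*} [Field k] [AddCommMonoid M]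
    [NoZeroDivisors k[M]] {d : M →+ ℕ} (hsurj : Function.Surjective d)
    (hinj : ¬ Function.Injective d) : 2 ≤ ringKrullDim k[M] :=
  calc (2 : WithBot ℕ∞) = ringKrullDim k[ℕ] + 1 := by
        rw [← ringKrullDim_eq_of_ringEquiv (Polynomial.toFinsuppIso k),
          IsPrincipalIdealRing.ringKrullDim_eq_one _ (Polynomial.not_isField k),
          one_add_one_eq_two]
    _ ≤ ringKrullDim k[M] := ringKrullDim_addMonoidAlgebra_succ_le k hsurj hinj

end MonoidAlgebra

section Saturation

variable {M : Type*} [AddCommMonoid M] {S : AddSubmonoid M}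

/-- `S` is saturated in nonnegative degrees if every `a = p - q` in `ℤS` of degree
`δ p - δ q ≥ 0` with `a + (S ∖ {0}) ⊆ S` lies in `S`. It is the combinatorial form of the vanishing
of the local cohomology `H¹_𝔪(k[S])` in nonnegative degrees. Membership `p - q ∈ S` is written
`p ∈ q + S`, as `M` has no subtraction. -/
def IsNonnegSaturated (S : AddSubmonoid M) (δ : M → ℕ) : Prop :=
  ∀ p ∈ S, ∀ q ∈ S, δ q ≤ δ p →
    (∀ s ∈ S, s ≠ 0 → p + s ∈ q +ᵥ (S : Set M)) → p ∈ q +ᵥ (S : Set M)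

theorem coe_mem_coe_vadd_iff {p q : S} : (p : M) ∈ (q : M) +ᵥ (S : Set M) ↔ ∃ t, p = q + t := by
  simp [Set.mem_vadd_set, Subtype.ext_iff, eq_comm]

theorem add_mem_vadd {q x t : M} (hx : x ∈ q +ᵥ (S : Set M)) (ht : t ∈ S) :
    x + t ∈ q +ᵥ (S : Set M) := by
  obtain ⟨s, hs, rfl⟩ := hx
  exact ⟨s + t, S.add_mem hs ht, (add_assoc q s t).symm⟩

theorem mem_of_mem_closure_of_ne_zero {I E : Set M}
    (hI : ∀ s ∈ I, ∀ t ∈ AddSubmonoid.closure E, s + t ∈ I) (hEI : E ⊆ I) {x : M}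
    (hx : x ∈ AddSubmonoid.closure E) (hx0 : x ≠ 0) : x ∈ I := by
  induction hx using AddSubmonoid.closure_induction_left with
  | zero => exact absurd rfl hx0
  | add_left e he y hy _ => exact hI e (hEI he) y hy

theorem exists_notMem_forall_add_mem {I : Set M} (hI : ∀ s ∈ I, ∀ t ∈ S, s + t ∈ I) (h0 : 0 ∉ I)
    (G : Finset M) (hGS : ∀ g ∈ G, g ∈ S) (hG : ∀ g ∈ G, ∃ N : ℕ, N • g ∈ I) :
    ∃ s ∈ S, s ∉ I ∧ ∀ g ∈ G, s + g ∈ I := by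
  classical
  induction G using Finset.induction_on with
  | empty => exact ⟨0, S.zero_mem, h0, by simp⟩
  | insert g G _ ih =>
    rw [Finset.forall_mem_insert] at hGS hG
    obtain ⟨s, hs, hsI, hsG⟩ := ih hGS.2 hG.2
    have hex : ∃ N : ℕ, s + N • g ∈ I := hG.1.imp fun N hN => add_comm s _ ▸ hI _ hN s hs
    obtain ⟨m, hm⟩ : ∃ m, Nat.find hex = m + 1 := Nat.exists_eq_succ_of_ne_zero fun h =>
      hsI (by simpa [h] using Nat.find_spec hex)
    have hmg : m • g ∈ S := S.nsmul_mem hGS.1 m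
    refine ⟨s + m • g, S.add_mem hs hmg, Nat.find_min hex (by lia), ?_⟩
    rw [Finset.forall_mem_insert]
    constructor
    · simpa [hm, succ_nsmul, add_assoc] using Nat.find_spec hex
    · exact fun g' hg' => add_right_comm s _ _ ▸ hI _ (hsG g' hg') _ hmg

theorem IsNonnegSaturated.mem_vadd_of_forall_add_mem {δ : M → ℕ} (hS : IsNonnegSaturated S δ)
    (hδ : ∀ a ∈ S, ∀ b ∈ S, δ a ≤ δ (a + b)) {G : Finset M}
    (hG : AddSubmonoid.closure (G : Set M) = S) {E : Set M} (hES : E ⊆ S)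
    (hGE : ∀ g ∈ G, ∃ N : ℕ, N • g ∈ AddSubmonoid.closure E ∧ N • g ≠ 0) {p q : M} (hp : p ∈ S)
    (hq : q ∈ S) (hqp : δ q ≤ δ p) (h : ∀ e ∈ E, p + e ∈ q +ᵥ (S : Set M)) :
    p ∈ q +ᵥ (S : Set M) := by
  subst hG
  let I : Set M := {s | p + s ∈ q +ᵥ (AddSubmonoid.closure (G : Set M) : Set M)}
  have hI : ∀ s ∈ I, ∀ t ∈ AddSubmonoid.closure (G : Set M), s + t ∈ I := fun s hs t ht => by
    simpa [I, add_assoc] using add_mem_vadd hs ht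
  by_contra hpq
  obtain ⟨s, hs, hsI, hsG⟩ := exists_notMem_forall_add_mem hI (by simpa [I] using hpq) G
    (fun g hg => AddSubmonoid.subset_closure hg) fun g hg => by
      obtain ⟨N, hN, hN0⟩ := hGE g hg
      exact ⟨N, mem_of_mem_closure_of_ne_zero
        (fun s hs t ht => hI s hs t (AddSubmonoid.closure_le.2 hES ht)) h hN hN0⟩
  refine hsI (hS (p + s) (add_mem hp hs) q hq (hqp.trans (hδ p hp s hs)) fun t ht ht0 => ?_)
  rw [add_assoc]
  refine mem_of_mem_closure_of_ne_zero (I := {t | s + t ∈ I}) (fun t ht u hu => ?_) hsG ht ht0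
  simpa [add_assoc] using hI _ ht u hu

end Saturation

section CohenMacaulay

open AddMonoidAlgebra

instance {M : Type*} [AddCommMonoid M] [UniqueSums M] (S : AddSubmonoid M) : UniqueSums S :=
  .of_injective_addHom (S.subtype : S →ₙ+ M) Subtype.val_injective inferInstance

variable {k : Type*} [Field k] {n : ℕ} {S : AddSubmonoid (Fin n → ℕ)}

theorem single_dvd_mul_single_of_mem_sgMaxIdeal {p q : S} (h : ∀ s ≠ 0, ∃ t, p + s = q + t)
    {f : k[S]} (hf : f ∈ sgMaxIdeal k S) : single q 1 ∣ f * single p 1 := by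
  have hle : sgMaxIdeal k S ≤ (Ideal.span {(single q 1 : k[S])}).colon {single p 1} := by
    rw [sgMaxIdeal, Ideal.span_le]
    rintro _ ⟨s, hs, rfl⟩
    rw [SetLike.mem_coe, Submodule.mem_colon_singleton, smul_eq_mul, single_mul_single, one_mul,
      add_comm, Ideal.mem_span_singleton]
    exact single_one_dvd_single_one_iff.2 (h s hs)
  exact Ideal.mem_span_singleton.1 (Submodule.mem_colon_singleton.1 (hle hf))

theorem exists_eq_add_of_two_le_ringKrullDim (hCM : IsCMWrt (sgMaxIdeal k S))
    (hdim : 2 ≤ ringKrullDim k[S]) {p q : S} (h : ∀ s ≠ 0, ∃ t, p + s = q + t) :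
    ∃ t, p = q + t := by
  obtain ⟨l, hl, hreg, hlen⟩ := hCM
  rw [← hlen] at hdim
  have hq : (single q 1 : k[S]) ∈ nonZeroDivisors k[S] := mem_nonZeroDivisors_of_ne_zero (by simp)
  exact single_one_dvd_single_one_iff.1 <| hreg.dvd_of_forall_dvd_mul (by exact_mod_cast hdim) hq
    fun f hf => single_dvd_mul_single_of_mem_sgMaxIdeal h (hl f hf)

theorem exists_eq_add_of_injective {M : Type*} [AddCommMonoid M] {d : M →+ ℕ}
    (hsurj : Function.Surjective d) (hinj : Function.Injective d) {p q : M} (hqp : d q ≤ d p) :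
    ∃ t, p = q + t := by
  obtain ⟨t, ht⟩ := hsurj (d p - d q)
  exact ⟨t, hinj (by rw [map_add, ht, Nat.add_sub_cancel' hqp])⟩

theorem IsCMWrt.isNonnegSaturated {G : Finset (Fin n → ℕ)}
    (hCM : IsCMWrt (sgMaxIdeal k S)) (hG : AddSubmonoid.closure ↑G = S) {δ : (Fin n → ℕ) → ℕ}
    (hδadd : ∀ a ∈ S, ∀ b ∈ S, δ (a + b) = δ a + δ b) (hδ0 : δ 0 = 0)
    (hδG : ∀ g ∈ G, δ g = 1) : IsNonnegSaturated S δ := by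
  intro p hp q hq hqp h
  obtain rfl | ⟨g, hg⟩ := G.eq_empty_or_nonempty
  · rw [← hG, Finset.coe_empty, AddSubmonoid.closure_empty, AddSubmonoid.mem_bot] at hp hq
    exact ⟨0, S.zero_mem, by simp [hp, hq]⟩
  lift p to S using hp
  lift q to S using hq
  rw [coe_mem_coe_vadd_iff]
  have hgS : g ∈ S := hG ▸ AddSubmonoid.subset_closure hg
  let d : S →+ ℕ :=
    { toFun := fun s => δ s
      map_zero' := hδ0
      map_add' := fun s t => hδadd s s.2 t t.2 }
  have hsurj : Function.Surjective d := fun m =>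
    ⟨m • ⟨g, hgS⟩, by rw [map_nsmul, show d ⟨g, hgS⟩ = 1 from hδG g hg, smul_eq_mul, mul_one]⟩
  by_cases hinj : Function.Injective d
  · exact exists_eq_add_of_injective hsurj hinj hqp
  · have hdim := two_le_ringKrullDim_addMonoidAlgebra k hsurj hinj
    exact exists_eq_add_of_two_le_ringKrullDim hCM hdim fun s hs =>
      coe_mem_coe_vadd_iff.1 (h s s.2 (by simpa using hs))

end CohenMacaulay

section ConvexCone

open Submodule

theorem setOf_exists_nonneg_smul_eq_span {E : Type*} [AddCommGroup E] [Module ℝ E] (v : E) :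
    {x | ∃ r : ℝ, 0 ≤ r ∧ x = r • v} = (ℝ≥0 ∙ v : Set E) := by
  ext x
  simp [mem_span_singleton, NNReal.exists, NNReal.smul_def, eq_comm]

theorem setOf_exists_nonneg_sum_eq_span {ι E : Type*} [AddCommGroup E] [Module ℝ E]
    (G : Finset ι) (f : ι → E) :
    {x | ∃ c : ι → ℝ, (∀ i, 0 ≤ c i) ∧ x = ∑ i ∈ G, c i • f i} = (span ℝ≥0 (f '' G) : Set E) := by
  ext x
  rw [SetLike.mem_coe, mem_span_image_finset_iff_exists_fun']
  constructor
  · rintro ⟨c, hc, rfl⟩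
    exact ⟨fun i => ⟨c i, hc i⟩, rfl⟩
  · rintro ⟨c, rfl⟩
    exact ⟨fun i => c i, fun i => (c i).2, rfl⟩

theorem nonneg_of_mem_span {E : Type*} [AddCommGroup E] [PartialOrder E] [IsOrderedAddMonoid E]
    [Module ℝ E] [PosSMulMono ℝ E] {s : Set E} (hs : ∀ x ∈ s, 0 ≤ x) {x : E}
    (hx : x ∈ span ℝ≥0 s) : 0 ≤ x := by
  induction hx using span_induction with
  | mem x hx => exact hs x hx
  | zero => exact le_rfl
  | add x y _ _ hx hy => exact add_nonneg hx hy
  | smul a x _ hx => exact smul_nonneg (α := ℝ) a.2 hx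

theorem eq_zero_of_add_eq_smul_of_notMem {E : Type*} [AddCommGroup E] [PartialOrder E]
    [IsOrderedAddMonoid E] [Module ℝ E] [IsOrderedModule ℝ E] {K : Submodule ℝ≥0 E}
    (hK : ∀ x ∈ K, 0 ≤ x) {v : E} (hv : 0 ≤ v) (hvK : v ∉ K) {x y : E} (hx : x ∈ K) (hy : y ∈ K)
    {t : ℝ} (h : x + y = t • v) : x = 0 := by
  have ht : t ≤ 0 := by
    by_contra! ht
    lift t to ℝ≥0 using ht.le
    have hinv : t⁻¹ • (x + y) = v := by
      rw [h]
      exact inv_smul_smul₀ (NNReal.coe_pos.1 ht).ne' v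
    exact hvK (hinv ▸ K.smul_mem _ (K.add_mem hx hy))
  refine le_antisymm ?_ (hK x hx)
  calc x ≤ x + y := le_add_of_nonneg_right (hK y hy)
    _ = t • v := h
    _ ≤ 0 := smul_nonpos_of_nonpos_of_nonneg ht hv

theorem isExtremalRayOfCone_span_singleton {d : ℕ} {C : Submodule ℝ≥0 (Fin d → ℝ)} {v : Fin d → ℝ}
    (hv0 : v ≠ 0) (hvC : v ∈ C) (h : ∀ x ∈ C, ∀ y ∈ C, x + y ∈ ℝ≥0 ∙ v → x ∈ ℝ≥0 ∙ v) :
    IsExtremalRayOfCone (C : Set (Fin d → ℝ)) (ℝ≥0 ∙ v : Set (Fin d → ℝ)) := by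
  refine ⟨⟨(span_singleton_le_iff_mem v C).2 hvC, fun r hr y hy => ?_, fun x hx y hy => ?_⟩, ?_⟩
  · exact smul_mem _ (⟨r, hr⟩ : ℝ≥0) hy
  · exact ⟨fun hxy => ⟨h x hx y hy hxy, h y hy x hx (add_comm x y ▸ hxy)⟩,
      fun hxy => add_mem hxy.1 hxy.2⟩
  · rw [span_span_of_tower]
    exact finrank_span_singleton hv0

theorem isExtremalRayOfCone_span_insert {d : ℕ} {s : Set (Fin d → ℝ)} (hs : ∀ x ∈ s, 0 ≤ x)
    {v : Fin d → ℝ} (hv : 0 ≤ v) (hvs : v ∉ span ℝ≥0 s) :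
    IsExtremalRayOfCone (span ℝ≥0 (insert v s) : Set (Fin d → ℝ))
      (ℝ≥0 ∙ v : Set (Fin d → ℝ)) := by
  have hv0 : v ≠ 0 := fun h => hvs (h ▸ zero_mem _)
  refine isExtremalRayOfCone_span_singleton hv0 (subset_span (Set.mem_insert v s)) ?_
  intro x hx y hy hxy
  obtain ⟨p, x', hx', rfl⟩ := mem_span_insert.1 hx
  obtain ⟨q, y', hy', rfl⟩ := mem_span_insert.1 hy
  obtain ⟨r, hr⟩ := mem_span_singleton.1 hxy
  have hsum : x' + y' = ((r : ℝ) - p - q) • v := by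
    simp only [NNReal.smul_def] at hr
    rw [sub_smul, sub_smul, hr]
    abel
  have hx'0 : x' = 0 :=
    eq_zero_of_add_eq_smul_of_notMem (fun _ => nonneg_of_mem_span hs) hv hvs hx' hy' hsum
  rw [hx'0, add_zero]
  exact smul_mem _ p (mem_span_singleton_self v)

theorem exists_subset_span_image_eq_forall_notMem {R ι E : Type*} [Semiring R] [AddCommMonoid E]
    [Module R E] (f : ι → E) (G : Finset ι) :
    ∃ B ⊆ G, span R (f '' B) = span R (f '' G) ∧ ∀ b ∈ B, f b ∉ span R (f '' (B \ {b})) := by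
  classical
  obtain ⟨B, ⟨hBG, hB⟩, hmin⟩ := exists_minimal_of_wellFoundedLT
    (fun B : Finset ι => B ⊆ G ∧ span R (f '' B) = span R (f '' G)) ⟨G, subset_rfl, rfl⟩
  refine ⟨B, hBG, hB, fun b hb hmem => ?_⟩
  rw [← Finset.coe_erase] at hmem
  refine Finset.notMem_erase b B (hmin ⟨(B.erase_subset b).trans hBG, ?_⟩ (B.erase_subset b) hb)
  rw [← hB, ← span_insert_eq_span hmem, ← Set.image_insert_eq, ← Finset.coe_insert,
    Finset.insert_erase hb]

end ConvexCone

section LatticeCone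

variable {n : ℕ}

theorem sum_floor_mul_le {ι K : Type*} [Semiring K] [LinearOrder K] [IsStrictOrderedRing K]
    [FloorSemiring K] {s : Finset ι} {c : ι → K} {m : ι → ℕ} {x : ℕ} (hc : ∀ i ∈ s, 0 ≤ c i)
    (h : ∑ i ∈ s, c i * m i = x) : ∑ i ∈ s, ⌊c i⌋₊ * m i ≤ x := by
  rw [← Nat.cast_le (α := K), ← h]
  push_cast
  exact Finset.sum_le_sum fun i hi => by gcongr; exact Nat.floor_le (hc i hi)

theorem le_sum_floor_mul_add_sum {ι K : Type*} [Semiring K] [LinearOrder K]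
    [IsStrictOrderedRing K] [FloorSemiring K] {s : Finset ι} {c : ι → K} {m : ι → ℕ} {x : ℕ}
    (h : ∑ i ∈ s, c i * m i = x) : x ≤ ∑ i ∈ s, ⌊c i⌋₊ * m i + ∑ i ∈ s, m i := by
  rw [← Nat.cast_le (α := K), ← h, ← Finset.sum_add_distrib]
  push_cast
  refine Finset.sum_le_sum fun i _ => ?_
  rw [← add_one_mul]
  gcongr
  exact (Nat.lt_floor_add_one _).le

theorem natVecToReal_nonneg (a : Fin n → ℕ) : 0 ≤ natVecToReal a := fun i => Nat.cast_nonneg (a i)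

theorem exists_eq_sum_floor_nsmul_add {B : Finset (Fin n → ℕ)} {c : (Fin n → ℕ) → ℝ≥0}
    {g : Fin n → ℕ} (h : ∑ b ∈ B, c b • natVecToReal b = natVecToReal g) :
    ∃ r ≤ ∑ b ∈ B, b, g = ∑ b ∈ B, ⌊c b⌋₊ • b + r := by
  have hcoord (i : Fin n) : ∑ b ∈ B, c b * (b i : ℝ≥0) = g i := by
    exact_mod_cast (by simpa [natVecToReal, NNReal.smul_def] using congrFun h i :
      ∑ b ∈ B, (c b : ℝ) * b i = g i)
  have hle : ∑ b ∈ B, ⌊c b⌋₊ • b ≤ g := fun i => by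
    simpa using sum_floor_mul_le (fun _ _ => zero_le) (hcoord i)
  have hge : g ≤ ∑ b ∈ B, ⌊c b⌋₊ • b + ∑ b ∈ B, b := fun i => by
    simpa using le_sum_floor_mul_add_sum (hcoord i)
  exact ⟨g - ∑ b ∈ B, ⌊c b⌋₊ • b, tsub_le_iff_left.2 hge, (add_tsub_cancel_of_le hle).symm⟩

theorem exists_nsmul_mem_closure {B : Finset (Fin n → ℕ)} {g : Fin n → ℕ}
    (hg : natVecToReal g ∈ Submodule.span ℝ≥0 (natVecToReal '' (B : Set (Fin n → ℕ)))) :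
    ∃ N ≠ 0, N • g ∈ AddSubmonoid.closure (B : Set (Fin n → ℕ)) := by
  obtain ⟨c, hc⟩ := Submodule.mem_span_image_finset_iff_exists_fun' ℝ≥0 |>.1 hg
  have hmul (N : ℕ) : ∑ b ∈ B, (N * c b) • natVecToReal b = natVecToReal (N • g) := by
    simp only [mul_smul, ← Finset.smul_sum, hc]
    ext i
    simp [natVecToReal, NNReal.smul_def]
  -- The remainders of `N • g` after removing integer parts lie in a finite box, so two coincide.
  choose r hr hNg using fun N => exists_eq_sum_floor_nsmul_add (hmul N)
  obtain ⟨N, N', hlt, heq⟩ := Set.Finite.exists_lt_map_eq_of_forall_mem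
    (t := Set.Iic (∑ b ∈ B, b)) hr (Set.finite_Iic _)
  have hfloor (b : Fin n → ℕ) : ⌊N * c b⌋₊ ≤ ⌊N' * c b⌋₊ := by gcongr
  have hdiff : (N' - N) • g = ∑ b ∈ B, (⌊N' * c b⌋₊ - ⌊N * c b⌋₊) • b := by
    apply add_right_cancel (b := N • g)
    calc (N' - N) • g + N • g = N' • g := by rw [← add_nsmul, Nat.sub_add_cancel hlt.le]
      _ = ∑ b ∈ B, (⌊N' * c b⌋₊ - ⌊N * c b⌋₊ + ⌊N * c b⌋₊) • b + r N' := by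
        simp only [Nat.sub_add_cancel (hfloor _), ← hNg N']
      _ = ∑ b ∈ B, (⌊N' * c b⌋₊ - ⌊N * c b⌋₊) • b + N • g := by
        rw [hNg N, heq]
        simp only [add_nsmul, Finset.sum_add_distrib, add_assoc]
  refine ⟨N' - N, (Nat.sub_pos_of_lt hlt).ne', hdiff ▸ ?_⟩
  exact sum_mem fun b hb => nsmul_mem (AddSubmonoid.subset_closure hb) _

theorem exists_subset_isExtremalRayOfCone (G : Finset (Fin n → ℕ)) :
    ∃ B ⊆ G,
      (∀ b ∈ B, IsExtremalRayOfCone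
        (Submodule.span ℝ≥0 (natVecToReal '' (G : Set (Fin n → ℕ))) : Set (Fin n → ℝ))
        (Submodule.span ℝ≥0 {natVecToReal b} : Set (Fin n → ℝ))) ∧
      ∀ g ∈ G, ∃ N ≠ 0, N • g ∈ AddSubmonoid.closure (B : Set (Fin n → ℕ)) := by
  obtain ⟨B, hBG, hB, hirr⟩ := exists_subset_span_image_eq_forall_notMem (R := ℝ≥0) natVecToReal G
  refine ⟨B, hBG, fun b hb => ?_, fun g hg => exists_nsmul_mem_closure ?_⟩
  · have hins : insert (natVecToReal b) (natVecToReal '' (B \ {b})) = natVecToReal '' B := by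
      rw [← Set.image_insert_eq, Set.insert_sdiff_singleton, Set.insert_eq_of_mem hb]
    rw [← hB, ← hins]
    refine isExtremalRayOfCone_span_insert ?_ (natVecToReal_nonneg b) (hirr b hb)
    exact Set.forall_mem_image.2 fun a _ => natVecToReal_nonneg a
  · exact hB ▸ Submodule.subset_span (Set.mem_image_of_mem _ hg)

end LatticeCone

section Trace

variable {n : ℕ} {S : AddSubmonoid (Fin n → ℕ)} {G V : Finset (Fin n → ℕ)}

theorem MemSminusV.add_mem_vadd {u : Fin n → ℤ} (hu : MemSminusV S V u) {a v w : Fin n → ℕ}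
    (ha : natVecToInt a = u + natVecToInt w) (hv : v ∈ V) :
    v + a ∈ w +ᵥ (S : Set (Fin n → ℕ)) := by
  obtain ⟨s, hs, hus⟩ := hu.2 v hv
  refine ⟨s, hs, funext fun i => ?_⟩
  have hai := congrFun ha i
  have husi := congrFun hus i
  simp only [natVecToInt, Pi.add_apply] at hai husi
  simp only [vadd_eq_add, Pi.add_apply]
  lia

theorem notMem_vadd_of_single_notMem_span {k : Type*} [Field k] (hVS : ∀ v ∈ V, v ∈ S)
    {v w : Fin n → ℕ} (hv : v ∈ V) (hw : w ∈ V) (hwv : w ≠ v)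
    (h : AddMonoidAlgebra.single (⟨v, hVS v hv⟩ : ↥S) (1 : k) ∉ Ideal.span
      {x | ∃ w, ∃ hw : w ∈ V.erase v,
        x = AddMonoidAlgebra.single (⟨w, hVS w (Finset.mem_of_mem_erase hw)⟩ : ↥S) (1 : k)}) :
    v ∉ w +ᵥ (S : Set (Fin n → ℕ)) := by
  intro hmem
  lift v to S using hVS v hv
  lift w to S using hVS w hw
  refine h (Ideal.mem_of_dvd _
    (single_one_dvd_single_one_iff.2 (coe_mem_coe_vadd_iff.1 hmem)) (Ideal.subset_span ?_))
  exact ⟨w, Finset.mem_erase.2 ⟨hwv, hw⟩, rfl⟩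

theorem extremal_ray_not_in_trace_general (hG : AddSubmonoid.closure ↑G = S) (hG0 : 0 ∉ G)
    {δ : (Fin n → ℕ) → ℕ} (hδ : ∀ a ∈ S, ∀ b ∈ S, δ a ≤ δ (a + b)) (hS : IsNonnegSaturated S δ)
    {v w : Fin n → ℕ} (hv : v ∈ V) (hvS : v ∈ S) (hwS : w ∈ S) (hδwv : δ w ≤ δ v)
    (hvw : v ∉ w +ᵥ (S : Set (Fin n → ℕ))) :
    ∃ a ∈ G,
      IsExtremalRayOfCone
        {x | ∃ c : (Fin n → ℕ) → ℝ, (∀ g, 0 ≤ c g) ∧ x = ∑ g ∈ G, c g • natVecToReal g}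
        {x | ∃ r : ℝ, 0 ≤ r ∧ x = r • natVecToReal a} ∧
      ¬ ∃ u, MemSminusV S V u ∧ natVecToInt a = u + natVecToInt w := by
  simp only [setOf_exists_nonneg_sum_eq_span, setOf_exists_nonneg_smul_eq_span]
  obtain ⟨B, hBG, hray, hGB⟩ := exists_subset_isExtremalRayOfCone G
  by_contra! h
  have hBS : (B : Set (Fin n → ℕ)) ⊆ S := hG ▸ fun b hb => AddSubmonoid.subset_closure (hBG hb)
  refine hvw (hS.mem_vadd_of_forall_add_mem hδ hG hBS (fun g hg => ?_) hvS hwS hδwv fun b hb => ?_)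
  · obtain ⟨N, hN, hNg⟩ := hGB g hg
    exact ⟨N, hNg, smul_ne_zero hN (ne_of_mem_of_not_mem hg hG0)⟩
  · obtain ⟨u, hu, hbu⟩ := h b (hBG hb) (hray b hb)
    exact hu.add_mem_vadd hbu hv

end Trace

/-- Theorem 4.3: with `S`, `G`, `V` as in the nearly Gorenstein
set-up, if `|V_min| = 1` and `|V| ≥ 2`, then some minimal generator `a ∈ G`
spanning an extremal ray of `ℝ≥0·S` cannot be written as `v + u` with
`v ∈ V_min` and `u ∈ S - V`. -/
theorem extremal_ray_not_in_trace
    (k : Type*) [Field k] {n : ℕ} (S : AddSubmonoid (Fin n → ℕ))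
    (G : Finset (Fin n → ℕ)) (hGgen : AddSubmonoid.closure ↑G = S)
    (hGmin : ∀ g ∈ G, g ∉ AddSubmonoid.closure ↑(G.erase g))
    (δ : (Fin n → ℕ) → ℕ) (hδadd : ∀ a ∈ S, ∀ b ∈ S, δ (a + b) = δ a + δ b)
    (hδ0 : δ 0 = 0) (hδG : ∀ g ∈ G, δ g = 1)
    (hCM : IsCMWrt (sgMaxIdeal k S))
    (V : Finset (Fin n → ℕ)) (hVS : ∀ v ∈ V, v ∈ S)
    (I_R : Ideal (AddMonoidAlgebra k ↥S))
    (hIR : I_R = Ideal.span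
      {x | ∃ v, ∃ hv : v ∈ V, x = AddMonoidAlgebra.single (⟨v, hVS v hv⟩ : ↥S) (1 : k)})
    (hVmin : ∀ v, ∀ hv : v ∈ V,
      AddMonoidAlgebra.single (⟨v, hVS v hv⟩ : ↥S) (1 : k) ∉ Ideal.span
        {x | ∃ w, ∃ hw : w ∈ V.erase v,
          x = AddMonoidAlgebra.single (⟨w, hVS w (Finset.mem_of_mem_erase hw)⟩ : ↥S) (1 : k)})
    -- the set of minimal-degree elements of `V`:
    (Vmin : Finset (Fin n → ℕ))
    (hVminDef : ∀ v, v ∈ Vmin ↔ v ∈ V ∧ ∀ w ∈ V, δ v ≤ δ w)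
    (hVmin1 : Vmin.card = 1) (hV2 : 2 ≤ V.card)
    -- the cone `ℝ≥0 S`:
    (C : Set (Fin n → ℝ))
    (hC : C = {x | ∃ c : (Fin n → ℕ) → ℝ, (∀ g, 0 ≤ c g) ∧
      x = ∑ g ∈ G, c g • natVecToReal g}) :
    ∃ a ∈ G,
      IsExtremalRayOfCone C {x | ∃ r : ℝ, 0 ≤ r ∧ x = r • natVecToReal a} ∧
      ¬ ∃ v ∈ Vmin, ∃ u : Fin n → ℤ, MemSminusV S V u ∧
          natVecToInt a = u + natVecToInt v := by
  subst hC
  obtain ⟨w, rfl⟩ := Finset.card_eq_one.1 hVmin1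
  obtain ⟨hw, hmin⟩ := (hVminDef w).1 (Finset.mem_singleton_self w)
  obtain ⟨v, hv, hvw⟩ := Finset.exists_mem_ne hV2 w
  have hG0 : 0 ∉ G := fun h => by simpa [hδ0] using hδG 0 h
  have hδ : ∀ a ∈ S, ∀ b ∈ S, δ a ≤ δ (a + b) := fun a ha b hb =>
    (Nat.le_add_right _ _).trans_eq (hδadd a ha b hb).symm
  simpa only [Finset.mem_singleton, exists_eq_left] using
    extremal_ray_not_in_trace_general hGgen hG0 hδ (hCM.isNonnegSaturated hGgen hδadd hδ0 hδG) hv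
      (hVS v hv) (hVS w hw) (hmin v hv)
      (notMem_vadd_of_single_notMem_span hVS hv hw hvw.symm (hVmin v hv))

end
end
end

section
/- Let $n \geq 2$ and $R = \Bbbk[x_1, \dots, x_n]/(x_i x_j : i \neq j)$ be the Stanley-Reisner ring of $n$ points. Then $R$ is nearly Gorenstein and level. -/
noncomputable section

open MvPolynomial Classical
/-- The Stanley-Reisner ideal of `n` disjoint points. -/
def pointsIdeal (𝕜 : Type*) [Field 𝕜] (n : ℕ) : Ideal (MvPolynomial (Fin n) 𝕜) :=
  Ideal.span {x | ∃ i j : Fin n, i ≠ j ∧ x = X i * X j}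

/-! Write `xᵢ` for the class of `Xᵢ` and `s = ∑ xᵢ`. The coordinate axes embed the ring into a
product of polynomial rings in one variable, where `s` becomes the variable on every factor; hence
`s` is a non-zerodivisor. Since `xᵢ xⱼ = 0` for `i ≠ j`, the fraction `eᵢ = xᵢ / s` fixes `xᵢ` and
kills the other `xⱼ`. So `eᵢ` lies in the inverse of the ideal of differences, and multiplying a
difference involving `xᵢ` by `eᵢ` gives `± xᵢ`, which is therefore in the trace. Restricting to the
`i`-th axis kills every difference `x_z - xⱼ` except the `i`-th, so these generators are
irredundant. -/

theorem exists_mul_algebraMap_eq_of_mem_span {A K : Type*} [CommSemiring A] [Semiring K]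
    [Algebra A K] {S : Set A} {y : K}
    (hy : ∀ w ∈ S, ∃ r : A, y * algebraMap A K w = algebraMap A K r) :
    ∀ w ∈ Ideal.span S, ∃ r : A, y * algebraMap A K w = algebraMap A K r := by
  have hle : Ideal.span S ≤ (LinearMap.range (Algebra.linearMap A K)).comap
      (LinearMap.mulLeft A y ∘ₗ Algebra.linearMap A K) :=
    Ideal.span_le.mpr fun w hw => (hy w hw).imp fun _ => Eq.symm
  exact fun w hw => (hle hw).imp fun _ => Eq.symm

theorem mem_traceIdeal_of_mul_eq {A : Type*} [CommRing A] {I : Ideal A} {w a : A}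
    {y : FractionRing A} (hw : w ∈ I)
    (hy : ∀ v ∈ I, ∃ r : A,
      y * algebraMap A (FractionRing A) v = algebraMap A (FractionRing A) r)
    (h : y * algebraMap A (FractionRing A) w = algebraMap A (FractionRing A) a) :
    a ∈ traceIdeal I :=
  Submodule.subset_span ⟨w, hw, y, hy, by rw [Algebra.linearMap_apply, ← h, mul_comm]⟩

section OrthogonalFamily

variable {ι A : Type*}

theorem mul_sum_of_pairwise_mul_eq_zero [Fintype ι] [NonUnitalNonAssocSemiring A] {x : ι → A}
    (hx : Pairwise fun i j => x i * x j = 0) (i : ι) : x i * ∑ j, x j = x i * x i := by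
  rw [Finset.mul_sum, Fintype.sum_eq_single i fun j hj => hx hj.symm]

/-- The fraction `xᵢ / ∑ⱼ xⱼ` in a localization `K` in which the sum is inverted. For pairwise
orthogonal `x` it is the idempotent that cuts out the `i`-th component. -/
def componentIdempotent [Fintype ι] [CommSemiring A] {M : Submonoid A} (K : Type*)
    [CommSemiring K] [Algebra A K] [IsLocalization M K] (x : ι → A) (hs : ∑ j, x j ∈ M)
    (i : ι) : K :=
  IsLocalization.mk' K (x i) ⟨∑ j, x j, hs⟩

theorem componentIdempotent_mul_algebraMap [Fintype ι] [CommSemiring A] {M : Submonoid A}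
    (K : Type*) [CommSemiring K] [Algebra A K] [IsLocalization M K] {x : ι → A}
    (hx : Pairwise fun i j => x i * x j = 0) (hs : ∑ j, x j ∈ M) (i j : ι) :
    componentIdempotent K x hs i * algebraMap A K (x j) =
      algebraMap A K ((Pi.single i (x i) : ι → A) j) := by
  rw [componentIdempotent, mul_comm, IsLocalization.mul_mk'_eq_mk'_of_mul,
    IsLocalization.mk'_eq_iff_eq_mul, ← map_mul]
  congr 1
  obtain rfl | hji := eq_or_ne j i
  · rw [Pi.single_eq_same, mul_sum_of_pairwise_mul_eq_zero hx]
  · rw [Pi.single_eq_of_ne hji, zero_mul, hx hji]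

/-- The differences `x_z - xᵢ` for `i ≠ z`. For the coordinates of `n` points they generate the
canonical ideal. -/
def differencesFrom [Sub A] (x : ι → A) (z : ι) : Set A :=
  {a | ∃ i, i ≠ z ∧ a = x z - x i}

theorem finite_differencesFrom [Finite ι] [Sub A] (x : ι → A) (z : ι) :
    (differencesFrom x z).Finite :=
  (Set.finite_range fun i => x z - x i).subset fun _ ⟨i, _, ha⟩ => ⟨i, ha.symm⟩

theorem span_range_le_traceIdeal_span_differencesFrom [Fintype ι] [Nontrivial ι] [CommRing A]
    {x : ι → A} (hx : Pairwise fun i j => x i * x j = 0)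
    (hs : ∑ j, x j ∈ nonZeroDivisors A) (z : ι) :
    Ideal.span (Set.range x) ≤ traceIdeal (Ideal.span (differencesFrom x z)) := by
  let e := componentIdempotent (FractionRing A) x hs
  let c (i : ι) : ι → A := Pi.single i (x i)
  have he_sub (i j k : ι) : e i * algebraMap A (FractionRing A) (x j - x k) =
      algebraMap A (FractionRing A) (c i j - c i k) := by
    simp only [e, c, map_sub, mul_sub, componentIdempotent_mul_algebraMap _ hx]
  have he_inv (i : ι) := exists_mul_algebraMap_eq_of_mem_span (y := e i)
    (S := differencesFrom x z) (by rintro _ ⟨k, -, rfl⟩; exact ⟨_, he_sub i z k⟩)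
  have hmem {i j : ι} (hj : j ≠ z) : c i z - c i j ∈
      traceIdeal (Ideal.span (differencesFrom x z)) :=
    mem_traceIdeal_of_mul_eq (Ideal.subset_span ⟨j, hj, rfl⟩) (he_inv i) (he_sub i z j)
  rw [Ideal.span_le]
  rintro _ ⟨i, rfl⟩
  obtain rfl | hi := eq_or_ne i z
  · obtain ⟨j, hj⟩ := exists_ne i
    simpa [c, hj] using hmem (i := i) hj
  · simpa [c, hi.symm] using hmem (i := i) hi

theorem notMem_span_differencesFrom_diff_singleton [CommRing A] {B : Type*} [Ring B]
    {x : ι → A} {z i : ι} (hi : i ≠ z) (f : A →+* B) (hfi : f (x i) ≠ 0)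
    (hf : ∀ j ≠ i, f (x j) = 0) :
    x z - x i ∉ Ideal.span (differencesFrom x z \ {x z - x i}) := by
  have hker : Ideal.span (differencesFrom x z \ {x z - x i}) ≤ RingHom.ker f := by
    rw [Ideal.span_le]
    rintro _ ⟨⟨j, -, rfl⟩, hne⟩
    have hji : j ≠ i := by rintro rfl; exact hne rfl
    simp [hf z hi.symm, hf j hji]
  intro hmem
  simpa [hf z hi.symm, hfi] using hker hmem

end OrthogonalFamily

section AxesIdeal

variable {σ R : Type*}

/-- The ideal of the union of the coordinate axes in affine `σ`-space: the Stanley-Reisner ideal of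
a set `σ` of disjoint points. It is `pointsIdeal` for an arbitrary index type and coefficients. -/
def axesIdeal (σ R : Type*) [CommSemiring R] : Ideal (MvPolynomial σ R) :=
  Ideal.span {p | ∃ i j : σ, i ≠ j ∧ p = X i * X j}

theorem mem_axesIdeal_of_coeff_single_eq_zero [CommSemiring R] [Nonempty σ] {f : MvPolynomial σ R}
    (hf : ∀ i k, coeff (Finsupp.single i k) f = 0) : f ∈ axesIdeal σ R := by
  have hgen : {p : MvPolynomial σ R | ∃ i j : σ, i ≠ j ∧ p = X i * X j} =
      (fun m => monomial m (1 : R)) ''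
        {m | ∃ i j : σ, i ≠ j ∧ m = Finsupp.single i 1 + Finsupp.single j 1} := by
    ext p
    simp [X, monomial_mul, eq_comm, ← exists_and_right]
  rw [axesIdeal, hgen, mem_ideal_span_monomial_image]
  intro m hm
  have hcard : 1 < m.support.card := by
    by_contra! hle
    obtain ⟨i, k, rfl⟩ := Finsupp.card_support_le_one'.mp hle
    exact mem_support_iff.mp hm (hf i k)
  obtain ⟨i, hi, j, hj, hij⟩ := Finset.one_lt_card.mp hcard
  refine ⟨_, ⟨i, j, hij, rfl⟩, fun l => ?_⟩
  simp only [Finsupp.add_apply, Finsupp.single_apply]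
  grind

theorem coeff_aeval_single_X [CommSemiring R] (i : σ) (f : MvPolynomial σ R) (k : ℕ) :
    (aeval (Pi.single i Polynomial.X : σ → Polynomial R) f).coeff k =
      coeff (Finsupp.single i k) f := by
  induction f using MvPolynomial.induction_on generalizing k with
  | C a =>
    rw [aeval_C, Polynomial.algebraMap_eq, Polynomial.coeff_C, coeff_C]
    simp [eq_comm (a := k), eq_comm (a := (0 : σ →₀ ℕ))]
  | add p q hp hq => simp [hp, hq]
  | mul_X p j hp =>
    rw [map_mul, aeval_X, coeff_mul_X']
    obtain rfl | hji := eq_or_ne j i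
    · cases k with
      | zero => simp
      | succ k => simp [hp, Finsupp.single_add]
    · have hj : j ∉ (Finsupp.single i k).support := by simp [hji.symm]
      rw [Pi.single_eq_of_ne hji, mul_zero, Polynomial.coeff_zero, if_neg hj]

end AxesIdeal

section AxesRing

/-- The Stanley-Reisner ring of a set `σ` of disjoint points. -/
abbrev AxesRing (σ R : Type*) [CommRing R] : Type _ :=
  MvPolynomial σ R ⧸ axesIdeal σ R

/-- The class of the variable `X i` in the Stanley-Reisner ring. -/
def axesCoord {σ : Type*} (R : Type*) [CommRing R] (i : σ) : AxesRing σ R :=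
  Ideal.Quotient.mk (axesIdeal σ R) (X i)

variable {σ R : Type*} [CommRing R]

theorem pairwise_axesCoord_mul_eq_zero :
    Pairwise fun i j : σ => axesCoord R i * axesCoord R j = 0 := fun i j hij =>
  Ideal.Quotient.eq_zero_iff_mem.mpr (Ideal.subset_span ⟨i, j, hij, rfl⟩)

/-- Restriction of functions to the `i`-th coordinate axis. -/
def axisRestriction (i : σ) : AxesRing σ R →ₐ[R] Polynomial R :=
  Ideal.Quotient.liftₐ (axesIdeal σ R) (aeval (Pi.single i Polynomial.X)) <| by
    suffices axesIdeal σ R ≤ RingHom.ker (aeval (Pi.single i (Polynomial.X : Polynomial R))) from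
      fun a ha => this ha
    rw [axesIdeal, Ideal.span_le]
    rintro _ ⟨a, b, hab, rfl⟩
    simp only [SetLike.mem_coe, RingHom.mem_ker, map_mul, aeval_X, Pi.single_apply]
    grind

theorem axisRestriction_mk (i : σ) (f : MvPolynomial σ R) :
    axisRestriction i (Ideal.Quotient.mk (axesIdeal σ R) f) =
      aeval (Pi.single i Polynomial.X) f :=
  rfl

theorem axisRestriction_axesCoord (i j : σ) :
    axisRestriction i (axesCoord R j) = (Pi.single i Polynomial.X : σ → Polynomial R) j :=
  aeval_X _ j

theorem eq_zero_of_forall_axisRestriction_eq_zero [Nonempty σ] {a : AxesRing σ R}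
    (ha : ∀ i, axisRestriction i a = 0) : a = 0 := by
  obtain ⟨f, rfl⟩ := Ideal.Quotient.mk_surjective a
  refine Ideal.Quotient.eq_zero_iff_mem.mpr (mem_axesIdeal_of_coeff_single_eq_zero fun i k => ?_)
  rw [← coeff_aeval_single_X, ← axisRestriction_mk, ha, Polynomial.coeff_zero]

theorem sum_axesCoord_mem_nonZeroDivisors [Fintype σ] [Nonempty σ] :
    ∑ j : σ, axesCoord R j ∈ nonZeroDivisors (AxesRing σ R) := by
  refine mem_nonZeroDivisors_iff_right.mpr fun a ha =>
    eq_zero_of_forall_axisRestriction_eq_zero fun i => ?_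
  have hsum : axisRestriction i (∑ j, axesCoord R j) = Polynomial.X := by
    simp [map_sum, axisRestriction_axesCoord]
  have hmul : axisRestriction i a * Polynomial.X = 0 := by rw [← hsum, ← map_mul, ha, map_zero]
  exact mem_nonZeroDivisors_iff_right.mp Polynomial.monic_X.mem_nonZeroDivisors _ hmul

theorem notMem_span_differencesFrom_axesCoord_diff_singleton [Nontrivial R] {z : σ}
    {t : AxesRing σ R} (ht : t ∈ differencesFrom (axesCoord R) z) :
    t ∉ Ideal.span (differencesFrom (axesCoord R) z \ {t}) := by
  obtain ⟨i, hi, rfl⟩ := ht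
  refine notMem_span_differencesFrom_diff_singleton hi (axisRestriction i).toRingHom ?_ ?_
  · simp [axisRestriction_axesCoord]
  · intro j hj
    simp [axisRestriction_axesCoord, hj]

theorem exists_isHomogeneous_one_of_mem_differencesFrom_axesCoord {z : σ} {t : AxesRing σ R}
    (ht : t ∈ differencesFrom (axesCoord R) z) :
    ∃ q : MvPolynomial σ R, q.IsHomogeneous 1 ∧ Ideal.Quotient.mk (axesIdeal σ R) q = t := by
  obtain ⟨i, -, rfl⟩ := ht
  exact ⟨X z - X i, (isHomogeneous_X R z).sub (isHomogeneous_X R i), map_sub _ _ _⟩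

end AxesRing

theorem points_nearlyGorenstein_and_level_general (R : Type*) [CommRing R] [Nontrivial R]
    {σ : Type*} [Finite σ] [Nontrivial σ] (z : σ) :
    (Ideal.span (Set.range (X : σ → MvPolynomial σ R))).map
        (Ideal.Quotient.mk (axesIdeal σ R)) ≤
      traceIdeal (Ideal.span (differencesFrom (axesCoord R) z)) ∧
    ∃ (d₀ : ℕ) (T : Finset (AxesRing σ R)),
      Ideal.span (↑T : Set _) = Ideal.span (differencesFrom (axesCoord R) z) ∧
      (∀ t ∈ T, ∃ q : MvPolynomial σ R,
        q.IsHomogeneous d₀ ∧ Ideal.Quotient.mk (axesIdeal σ R) q = t) ∧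
      (∀ t ∈ T, t ∉ Ideal.span (↑(T.erase t) : Set _)) := by
  have := Fintype.ofFinite σ
  have hfin := finite_differencesFrom (axesCoord R) z
  refine ⟨?_, 1, hfin.toFinset, by rw [hfin.coe_toFinset], fun t ht => ?_, fun t ht => ?_⟩
  · rw [Ideal.map_span, ← Set.range_comp]
    exact span_range_le_traceIdeal_span_differencesFrom pairwise_axesCoord_mul_eq_zero
      sum_axesCoord_mem_nonZeroDivisors z
  · exact exists_isHomogeneous_one_of_mem_differencesFrom_axesCoord (hfin.mem_toFinset.mp ht)
  · rw [Finset.coe_erase, hfin.coe_toFinset]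
    exact notMem_span_differencesFrom_axesCoord_diff_singleton (hfin.mem_toFinset.mp ht)

/-- Theorem 5.4 (a) for `n` points: the Stanley-Reisner ring `R` of
`n ≥ 2` points is nearly Gorenstein (`𝔪 ⊆ tr(ω_R) = I_R·I_R⁻¹` for the canonical
ideal `I_R = (x₁-x₂, …, x₁-xₙ)`) and level (the canonical ideal has a minimal
homogeneous generating set all of whose members have the same degree). -/
theorem points_nearlyGorenstein_and_level (𝕜 : Type*) [Field 𝕜] (n : ℕ) (hn : 2 ≤ n)
    (z : Fin n) (hz : (z : ℕ) = 0)
    (Ic : Ideal (MvPolynomial (Fin n) 𝕜 ⧸ pointsIdeal 𝕜 n))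
    (hIc : Ic = Ideal.span {x | ∃ i : Fin n, i ≠ z ∧
      x = Ideal.Quotient.mk (pointsIdeal 𝕜 n) (X z - X i)}) :
    -- `R` is nearly Gorenstein:
    (Ideal.span (Set.range (X : Fin n → MvPolynomial (Fin n) 𝕜))).map
        (Ideal.Quotient.mk (pointsIdeal 𝕜 n)) ≤ traceIdeal Ic ∧
    -- `R` is level:
    ∃ (d₀ : ℕ) (T : Finset (MvPolynomial (Fin n) 𝕜 ⧸ pointsIdeal 𝕜 n)),
      Ideal.span (↑T : Set _) = Ic ∧
      (∀ t ∈ T, ∃ q : MvPolynomial (Fin n) 𝕜,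
        q.IsHomogeneous d₀ ∧ Ideal.Quotient.mk (pointsIdeal 𝕜 n) q = t) ∧
      (∀ t ∈ T, t ∉ Ideal.span (↑(T.erase t) : Set _)) := by
  have : Nontrivial (Fin n) := Fin.nontrivial_iff_two_le.mpr hn
  exact hIc ▸ points_nearlyGorenstein_and_level_general 𝕜 z

end
end

section
/- Let $n \geq 2$ and let $R$ be the Stanley-Reisner ring of the path with $n$ edges, $R = \Bbbk[x_1,\dots,x_{n+1}]/(x_i x_j : |i-j| \geq 2)$, with canonical ideal $I_R = (x_k x_{k+1}^2 + x_{k+1}^2 x_{k+2} : 1 \leq k \leq n-1)$ and $g = \sum_{k=1}^n x_k^2 x_{k+1}^2 \in I_R$. Then the elements $x_1^2/g$, $x_{n+1}^2/g$, and $(\sum_{j=1}^n x_j x_{j+1})/g$ of the total quotient ring all lie in $I_R^{-1}$, and consequently $x_1, \dots, x_{n+1} \in I_R I_R^{-1} = \mathrm{tr}(\omega_R)$; hence $R$ is nearly Gorenstein. -/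
noncomputable section

open MvPolynomial
/-- `x ∈ I⁻¹`, i.e. `x · I ⊆ R` inside the total quotient ring of `R`. -/
def MemInv {R : Type*} [CommRing R] (I : Ideal R) (x : FractionRing R) : Prop :=
  ∀ y ∈ I, ∃ r : R, x * algebraMap R (FractionRing R) y = algebraMap R (FractionRing R) r

/-- The Stanley-Reisner ideal of the path with `n` edges. -/
def pathIdeal (𝕜 : Type*) [Field 𝕜] (n : ℕ) : Ideal (MvPolynomial (Fin (n + 1)) 𝕜) :=
  Ideal.span {x | ∃ i j : Fin (n + 1), (i : ℕ) + 2 ≤ (j : ℕ) ∧ x = X i * X j}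

/-!
On the path, `x_i x_j = 0` for distant vertices, so multiplying `∑ x_k ^ d x_{k+1} ^ d` by a
variable `x_b` leaves only the one or two edges at `b`. Hence `g = ∑ x_k ^ 2 x_{k+1} ^ 2` divides
the products of `x_1 ^ 2`, `x_{n+1} ^ 2` and `∑ x_j x_{j+1}` with every generator of the canonical
ideal, and suitable quotients are precisely the variables. To be allowed to divide by `g`, note that
the Stanley-Reisner ideal is the intersection of the primes generated by the variables off
an edge, and `g` lies in none of them: modulo such a prime it is a nonzero monomial.
-/

section FractionalInverse

variable {R : Type*} [CommRing R]

theorem mk'_mul_algebraMap_eq_algebraMap_iff {a f r : R} {g : nonZeroDivisors R} :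
    IsLocalization.mk' (FractionRing R) a g * algebraMap R (FractionRing R) f =
      algebraMap R (FractionRing R) r ↔ a * f = g * r := by
  rw [mul_comm, IsLocalization.mul_mk'_eq_mk'_of_mul, IsLocalization.mk'_eq_iff_eq_mul,
    ← map_mul, (IsFractionRing.injective R (FractionRing R)).eq_iff, mul_comm f, mul_comm r]

theorem memInv_mk'_iff {I : Ideal R} {a : R} {g : nonZeroDivisors R} :
    MemInv I (IsLocalization.mk' (FractionRing R) a g) ↔ ∀ f ∈ I, (g : R) ∣ a * f := by
  simp only [MemInv, mk'_mul_algebraMap_eq_algebraMap_iff, Dvd.dvd]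

theorem memInv_span_mk'_iff {S : Set R} {a : R} {g : nonZeroDivisors R} :
    MemInv (Ideal.span S) (IsLocalization.mk' (FractionRing R) a g) ↔
      ∀ f ∈ S, (g : R) ∣ a * f := by
  rw [memInv_mk'_iff]
  refine ⟨fun h f hf => h f (Ideal.subset_span hf), fun h f hf => ?_⟩
  induction hf using Submodule.span_induction with
  | mem f hf => exact h f hf
  | zero => simp
  | add f₁ f₂ _ _ h₁ h₂ => exact mul_add a f₁ f₂ ▸ dvd_add h₁ h₂
  | smul r f _ h => exact mul_smul_comm r a f ▸ h.mul_left r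

theorem mem_traceIdeal_of_mul_eq_s13 {I : Ideal R} {a f r : R} {g : nonZeroDivisors R}
    (ha : MemInv I (IsLocalization.mk' (FractionRing R) a g)) (hf : f ∈ I)
    (h : a * f = g * r) : r ∈ traceIdeal I :=
  Submodule.subset_span ⟨f, hf, _, ha,
    (mul_comm _ _ |>.trans (mk'_mul_algebraMap_eq_algebraMap_iff.2 h)).symm⟩

end FractionalInverse

section PathRelations

variable {A : Type*} [CommRing A] {n d : ℕ}

/-- The family `x` of elements of a ring satisfies the Stanley-Reisner relations of the path on
its index set: products over non-adjacent distinct vertices vanish. -/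
def PathRelations (x : Fin (n + 1) → A) : Prop :=
  ∀ ⦃i j : Fin (n + 1)⦄, (i : ℕ) + 2 ≤ j → x i * x j = 0

/-- The sum of the `d`-th powers of the edge monomials `x_k x_{k+1}` of the path. For `d = 2`
this is the denominator `g`. -/
def edgePowSum (x : Fin (n + 1) → A) (d : ℕ) : A :=
  ∑ k : Fin n, x k.castSucc ^ d * x k.succ ^ d

/-- The generator of the canonical ideal of the path attached to its `k`-th interior vertex, namely
`k.castSucc.succ`, whose neighbours are `k.castSucc.castSucc` and `k.succ.succ`. -/
def canonicalGenerator (x : Fin (n + 2) → A) (k : Fin n) : A :=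
  x k.castSucc.castSucc * x k.castSucc.succ ^ 2 + x k.castSucc.succ ^ 2 * x k.succ.succ

/-- The canonical ideal of the path, for an arbitrary family of ring elements in place of the
variables. -/
def canonicalIdeal (x : Fin (n + 2) → A) : Ideal A :=
  Ideal.span (Set.range (canonicalGenerator x))

theorem canonicalGenerator_mem_canonicalIdeal (x : Fin (n + 2) → A) (k : Fin n) :
    canonicalGenerator x k ∈ canonicalIdeal x :=
  Ideal.subset_span ⟨k, rfl⟩

namespace PathRelations

theorem mul_edge_eq_zero {x : Fin (n + 1) → A} (hx : PathRelations x) (hd : d ≠ 0)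
    {b : Fin (n + 1)} {k : Fin n} (hb : b ≠ k.castSucc) (hb' : b ≠ k.succ) :
    x b * (x k.castSucc ^ d * x k.succ ^ d) = 0 := by
  obtain ⟨d, rfl⟩ := Nat.exists_eq_add_one_of_ne_zero hd
  simp only [ne_eq, Fin.ext_iff, Fin.val_castSucc, Fin.val_succ] at hb hb'
  rcases lt_or_gt_of_ne hb with h | h
  · have h0 : x b * x k.succ = 0 := hx (by simp only [Fin.val_succ]; omega)
    linear_combination x k.castSucc ^ (d + 1) * x k.succ ^ d * h0
  · have h0 : x k.castSucc * x b = 0 := hx (by simp only [Fin.val_castSucc]; omega)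
    linear_combination x k.castSucc ^ d * x k.succ ^ (d + 1) * h0

theorem first_mul_edgePowSum {x : Fin (n + 2) → A} (hx : PathRelations x) (hd : d ≠ 0) :
    x 0 * edgePowSum x d = x 0 * (x 0 ^ d * x 1 ^ d) := by
  rw [edgePowSum, Finset.mul_sum, Finset.sum_eq_single 0]
  · rfl
  · exact fun k _ hk => hx.mul_edge_eq_zero hd
      (by simpa [eq_comm] using hk) (Fin.succ_ne_zero k).symm
  · simp

theorem last_mul_edgePowSum {x : Fin (n + 2) → A} (hx : PathRelations x) (hd : d ≠ 0) :
    x (Fin.last (n + 1)) * edgePowSum x d =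
      x (Fin.last (n + 1)) * (x (Fin.last n).castSucc ^ d * x (Fin.last (n + 1)) ^ d) := by
  rw [edgePowSum, Finset.mul_sum, Finset.sum_eq_single (Fin.last n)]
  · rfl
  · exact fun k _ hk => hx.mul_edge_eq_zero hd
      (Fin.castSucc_ne_last k).symm (by simpa [Fin.ext_iff, eq_comm] using hk)
  · simp

theorem interior_mul_edgePowSum {x : Fin (n + 2) → A} (hx : PathRelations x) (hd : d ≠ 0)
    (k : Fin n) :
    x k.castSucc.succ * edgePowSum x d =
      x k.castSucc.succ * (x k.castSucc.castSucc ^ d * x k.castSucc.succ ^ d +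
        x k.castSucc.succ ^ d * x k.succ.succ ^ d) := by
  rw [edgePowSum, Finset.mul_sum,
    Finset.sum_eq_add k.castSucc k.succ Fin.castSucc_lt_succ.ne, mul_add]
  · rfl
  · exact fun e _ he => hx.mul_edge_eq_zero hd
      (by simpa [Fin.ext_iff, eq_comm] using he.2) (by simpa [Fin.ext_iff, eq_comm] using he.1)
  · simp
  · simp

-- For a vertex `b` with neighbours `a` and `c`, both sides are `b (ab + bc) ^ 2`: the cross term of
-- the square vanishes because `ac = 0`.
theorem edgePowSum_one_mul_canonicalGenerator {x : Fin (n + 2) → A} (hx : PathRelations x)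
    (k : Fin n) :
    edgePowSum x 1 * canonicalGenerator x k = edgePowSum x 2 * x k.castSucc.succ := by
  have h₁ := hx.interior_mul_edgePowSum one_ne_zero k
  have h₂ := hx.interior_mul_edgePowSum two_ne_zero k
  have hac : x k.castSucc.castSucc * x k.succ.succ = 0 := hx (by simp)
  unfold canonicalGenerator
  linear_combination
    (x k.castSucc.castSucc * x k.castSucc.succ + x k.castSucc.succ * x k.succ.succ) * h₁ - h₂ +
      2 * x k.castSucc.succ ^ 3 * hac

theorem first_sq_mul_canonicalGenerator_zero {x : Fin (n + 3) → A} (hx : PathRelations x) :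
    x 0 ^ 2 * canonicalGenerator x 0 = edgePowSum x 2 * x 0 := by
  have h := hx.first_mul_edgePowSum two_ne_zero
  have hac : x 0 * x (0 : Fin (n + 1)).succ.succ = 0 := hx le_rfl
  change x 0 ^ 2 * (x 0 * x 1 ^ 2 + x 1 ^ 2 * x (0 : Fin (n + 1)).succ.succ) = _
  linear_combination x 0 * x 1 ^ 2 * hac - h

theorem first_mul_canonicalGenerator_succ {x : Fin (n + 3) → A} (hx : PathRelations x)
    (k : Fin n) : x 0 * canonicalGenerator x k.succ = 0 := by
  have h : x 0 * x k.succ.castSucc.succ = 0 := hx (by simp)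
  unfold canonicalGenerator
  linear_combination (x k.succ.castSucc.castSucc * x k.succ.castSucc.succ +
    x k.succ.castSucc.succ * x k.succ.succ.succ) * h

theorem last_sq_mul_canonicalGenerator_last {x : Fin (n + 3) → A} (hx : PathRelations x) :
    x (Fin.last (n + 2)) ^ 2 * canonicalGenerator x (Fin.last n) =
      edgePowSum x 2 * x (Fin.last (n + 2)) := by
  have h := hx.last_mul_edgePowSum two_ne_zero
  have hac : x (Fin.last n).castSucc.castSucc * x (Fin.last (n + 2)) = 0 := hx (by simp)
  change x (Fin.last (n + 2)) ^ 2 * (_ * x (Fin.last (n + 1)).castSucc ^ 2 +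
    x (Fin.last (n + 1)).castSucc ^ 2 * x (Fin.last (n + 2))) = _
  linear_combination x (Fin.last (n + 2)) * x (Fin.last (n + 1)).castSucc ^ 2 * hac - h

theorem last_mul_canonicalGenerator_castSucc {x : Fin (n + 3) → A} (hx : PathRelations x)
    (k : Fin n) : x (Fin.last (n + 2)) * canonicalGenerator x k.castSucc = 0 := by
  have h : x k.castSucc.castSucc.succ * x (Fin.last (n + 2)) = 0 := hx (by simp)
  unfold canonicalGenerator
  linear_combination (x k.castSucc.castSucc.castSucc * x k.castSucc.castSucc.succ +
    x k.castSucc.castSucc.succ * x k.castSucc.succ.succ) * h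

theorem memInv_first_sq_div {x : Fin (n + 3) → A} (hx : PathRelations x)
    (hg : edgePowSum x 2 ∈ nonZeroDivisors A) :
    MemInv (canonicalIdeal x) (IsLocalization.mk' _ (x 0 ^ 2) ⟨edgePowSum x 2, hg⟩) := by
  refine memInv_span_mk'_iff.2 (Set.forall_mem_range.2 fun k => ?_)
  cases k using Fin.cases with
  | zero => exact ⟨_, hx.first_sq_mul_canonicalGenerator_zero⟩
  | succ k => simp [sq, mul_assoc, hx.first_mul_canonicalGenerator_succ]

theorem memInv_last_sq_div {x : Fin (n + 3) → A} (hx : PathRelations x)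
    (hg : edgePowSum x 2 ∈ nonZeroDivisors A) :
    MemInv (canonicalIdeal x)
      (IsLocalization.mk' _ (x (Fin.last (n + 2)) ^ 2) ⟨edgePowSum x 2, hg⟩) := by
  refine memInv_span_mk'_iff.2 (Set.forall_mem_range.2 fun k => ?_)
  cases k using Fin.lastCases with
  | last => exact ⟨_, hx.last_sq_mul_canonicalGenerator_last⟩
  | cast k => simp [sq, mul_assoc, hx.last_mul_canonicalGenerator_castSucc]

theorem memInv_edgePowSum_one_div {x : Fin (n + 2) → A} (hx : PathRelations x)
    (hg : edgePowSum x 2 ∈ nonZeroDivisors A) :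
    MemInv (canonicalIdeal x) (IsLocalization.mk' _ (edgePowSum x 1) ⟨edgePowSum x 2, hg⟩) :=
  memInv_span_mk'_iff.2 <| Set.forall_mem_range.2 fun k =>
    ⟨_, hx.edgePowSum_one_mul_canonicalGenerator k⟩

theorem mem_traceIdeal {x : Fin (n + 3) → A} (hx : PathRelations x)
    (hg : edgePowSum x 2 ∈ nonZeroDivisors A) (i : Fin (n + 3)) :
    x i ∈ traceIdeal (canonicalIdeal x) := by
  have hmem := canonicalGenerator_mem_canonicalIdeal x
  cases i using Fin.cases with
  | zero =>
    exact mem_traceIdeal_of_mul_eq_s13 (hx.memInv_first_sq_div hg) (hmem 0)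
      hx.first_sq_mul_canonicalGenerator_zero
  | succ j =>
    cases j using Fin.lastCases with
    | last =>
      exact mem_traceIdeal_of_mul_eq_s13 (hx.memInv_last_sq_div hg) (hmem (Fin.last n))
        hx.last_sq_mul_canonicalGenerator_last
    | cast k =>
      exact mem_traceIdeal_of_mul_eq_s13 (hx.memInv_edgePowSum_one_div hg) (hmem k)
        (hx.edgePowSum_one_mul_canonicalGenerator k)

end PathRelations

end PathRelations

section PrimeDecomposition

theorem mk_mem_nonZeroDivisors_of_eq_iInf {R ι : Type*} [CommRing R] {I : Ideal R}
    {P : ι → Ideal R} (hI : I = ⨅ i, P i) (hP : ∀ i, (P i).IsPrime) {g : R}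
    (hg : ∀ i, g ∉ P i) : Ideal.Quotient.mk I g ∈ nonZeroDivisors (R ⧸ I) := by
  rw [mem_nonZeroDivisors_iff_right]
  intro r hr
  obtain ⟨p, rfl⟩ := Ideal.Quotient.mk_surjective r
  rw [← map_mul, Ideal.Quotient.eq_zero_iff_mem, hI, Ideal.mem_iInf] at hr
  rw [Ideal.Quotient.eq_zero_iff_mem, hI, Ideal.mem_iInf]
  exact fun i => ((hP i).mem_or_mem (hr i)).resolve_right (hg i)

theorem ker_killCompl {σ τ R : Type*} [CommSemiring R] {f : σ → τ} (hf : f.Injective) :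
    RingHom.ker (killCompl (R := R) hf) = Ideal.span (X '' (Set.range f)ᶜ) := by
  ext p
  rw [RingHom.mem_ker, mem_ideal_span_X_image]
  constructor
  · intro hp m hm
    by_contra! hsupp
    have hrange : (m.support : Set τ) ⊆ Set.range f := fun i hi => by
      by_contra hif
      exact Finsupp.mem_support_iff.1 hi (hsupp i hif)
    rw [mem_support_iff, ← Finsupp.mapDomain_comapDomain f hf m hrange,
      ← coeff_killCompl hf, hp, coeff_zero] at hm
    exact hm rfl
  · intro hp
    ext m
    rw [coeff_killCompl, coeff_zero]
    by_contra hm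
    obtain ⟨i, hi, hmi⟩ := hp _ (mem_support_iff.2 hm)
    exact hmi (Finsupp.mapDomain_of_notMem_range m i hi)

theorem isPrime_span_X_image {σ R : Type*} [CommRing R] [IsDomain R] (s : Set σ) :
    (Ideal.span (X '' s : Set (MvPolynomial σ R))).IsPrime := by
  have hker := ker_killCompl (R := R) (Subtype.val_injective (p := (· ∈ sᶜ)))
  rw [Subtype.range_coe, compl_compl] at hker
  exact hker ▸ RingHom.ker_isPrime _

theorem exists_add_two_le_iff_forall_edge {n : ℕ} {s : Finset (Fin (n + 2))} :
    (∃ i ∈ s, ∃ j ∈ s, (i : ℕ) + 2 ≤ j) ↔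
      ∀ e : Fin (n + 1), ∃ i ∈ s, i ≠ e.castSucc ∧ i ≠ e.succ := by
  constructor
  · rintro ⟨i, hi, j, hj, hij⟩ e
    by_contra! h
    have hi' := h i hi
    have hj' := h j hj
    simp only [ne_eq, Fin.ext_iff, Fin.val_castSucc, Fin.val_succ] at hi' hj'
    omega
  · intro h
    have hs : s.Nonempty := (h 0).imp fun _ hi => hi.1
    obtain ⟨j, hj, hj₁, hj₂⟩ := h ⟨min (s.min' hs) n, by omega⟩
    refine ⟨s.min' hs, s.min'_mem hs, j, hj, ?_⟩
    have hle : (s.min' hs : ℕ) ≤ j := s.min'_le j hj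
    simp only [ne_eq, Fin.ext_iff, Fin.val_castSucc, Fin.val_succ] at hj₁ hj₂
    omega

variable {𝕜 : Type*} [Field 𝕜] {n : ℕ}

theorem mem_pathIdeal_iff {p : MvPolynomial (Fin (n + 1)) 𝕜} :
    p ∈ pathIdeal 𝕜 n ↔
      ∀ m ∈ p.support, ∃ i ∈ m.support, ∃ j ∈ m.support, (i : ℕ) + 2 ≤ j := by
  have hspan : pathIdeal 𝕜 n = Ideal.span ((fun m => monomial m (1 : 𝕜)) ''
      {m | ∃ i j : Fin (n + 1), (i : ℕ) + 2 ≤ j ∧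
        Finsupp.single i 1 + Finsupp.single j 1 = m}) := by
    refine congrArg Ideal.span (Set.ext fun x => ?_)
    simp [X, monomial_mul, eq_comm]
  rw [hspan, mem_ideal_span_monomial_image]
  refine forall₂_congr fun m _ => ⟨?_, ?_⟩
  · rintro ⟨_, ⟨i, j, hij, rfl⟩, hle⟩
    have hi := hle i
    have hj := hle j
    simp only [Finsupp.add_apply, Finsupp.single_eq_same] at hi hj
    exact ⟨i, Finsupp.mem_support_iff.2 (by omega), j, Finsupp.mem_support_iff.2 (by omega), hij⟩
  · rintro ⟨i, hi, j, hj, hij⟩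
    refine ⟨_, ⟨i, j, hij, rfl⟩, fun k => ?_⟩
    rw [Finsupp.mem_support_iff] at hi hj
    rw [Finsupp.add_apply, Finsupp.single_apply, Finsupp.single_apply]
    split_ifs <;> grind

variable (𝕜) in
/-- The prime ideal generated by the variables off the edge `e`; these are the minimal primes of
the Stanley-Reisner ideal of the path. -/
def edgePrime (e : Fin n) : Ideal (MvPolynomial (Fin (n + 1)) 𝕜) :=
  Ideal.span (X '' {e.castSucc, e.succ}ᶜ)

theorem isPrime_edgePrime (e : Fin n) : (edgePrime 𝕜 e).IsPrime :=
  isPrime_span_X_image _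

theorem mem_edgePrime_iff {e : Fin n} {p : MvPolynomial (Fin (n + 1)) 𝕜} :
    p ∈ edgePrime 𝕜 e ↔
      ∀ m ∈ p.support, ∃ i ∈ m.support, i ≠ e.castSucc ∧ i ≠ e.succ := by
  simp [edgePrime, mem_ideal_span_X_image, and_comm]

theorem X_mem_edgePrime_iff {e : Fin n} {i : Fin (n + 1)} :
    X i ∈ edgePrime 𝕜 e ↔ i ≠ e.castSucc ∧ i ≠ e.succ := by
  simp [mem_edgePrime_iff, support_X, Finsupp.single_apply]

theorem pathIdeal_eq_iInf_edgePrime : pathIdeal 𝕜 (n + 1) = ⨅ e, edgePrime 𝕜 e := by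
  ext p
  simp only [Ideal.mem_iInf, mem_edgePrime_iff, mem_pathIdeal_iff,
    exists_add_two_le_iff_forall_edge]
  exact ⟨fun h e m hm => h m hm e, fun h m hm e => h e m hm⟩

theorem edgePowSum_X_notMem_edgePrime {d : ℕ} (hd : d ≠ 0) (e : Fin n) :
    edgePowSum X d ∉ edgePrime 𝕜 e := by
  have hterm (k : Fin n) : X k.castSucc ^ d * X k.succ ^ d ∈ edgePrime 𝕜 e ↔ k ≠ e := by
    have hprime := isPrime_edgePrime (𝕜 := 𝕜) e
    have hd' : 0 < d := Nat.pos_of_ne_zero hd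
    simp only [hprime.mul_mem_iff_mem_or_mem, hprime.pow_mem_iff_mem d hd', X_mem_edgePrime_iff,
      ne_eq, Fin.ext_iff, Fin.val_castSucc, Fin.val_succ]
    omega
  have hrest : ∑ k ∈ Finset.univ.erase e, X k.castSucc ^ d * X k.succ ^ d ∈ edgePrime 𝕜 e :=
    Ideal.sum_mem _ fun k hk => (hterm k).2 (Finset.ne_of_mem_erase hk)
  rw [edgePowSum, ← Finset.add_sum_erase _ _ (Finset.mem_univ e), Ideal.add_mem_iff_left _ hrest,
    hterm]
  exact not_ne_iff.2 rfl

end PrimeDecomposition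

section StanleyReisnerRing

variable (𝕜 : Type*) [Field 𝕜] (n : ℕ)

/-- The residue classes of the variables in the Stanley-Reisner ring of the path. -/
def pathVar (i : Fin (n + 1)) : MvPolynomial (Fin (n + 1)) 𝕜 ⧸ pathIdeal 𝕜 n :=
  Ideal.Quotient.mk (pathIdeal 𝕜 n) (X i)

theorem pathRelations_pathVar : PathRelations (pathVar 𝕜 n) := fun i j hij => by
  rw [pathVar, pathVar, ← map_mul, Ideal.Quotient.eq_zero_iff_mem]
  exact Ideal.subset_span ⟨i, j, hij, rfl⟩

theorem edgePowSum_pathVar (d : ℕ) :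
    edgePowSum (pathVar 𝕜 n) d = Ideal.Quotient.mk (pathIdeal 𝕜 n) (edgePowSum X d) := by
  simp only [edgePowSum, pathVar, map_sum, map_mul, map_pow]

theorem edgePowSum_pathVar_mem_nonZeroDivisors {d : ℕ} (hd : d ≠ 0) :
    edgePowSum (pathVar 𝕜 (n + 1)) d ∈
      nonZeroDivisors (MvPolynomial (Fin (n + 2)) 𝕜 ⧸ pathIdeal 𝕜 (n + 1)) :=
  edgePowSum_pathVar 𝕜 (n + 1) d ▸ mk_mem_nonZeroDivisors_of_eq_iInf
    pathIdeal_eq_iInf_edgePrime isPrime_edgePrime (edgePowSum_X_notMem_edgePrime hd)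

theorem canonicalIdeal_pathVar :
    canonicalIdeal (pathVar 𝕜 (n + 1)) = Ideal.span {x | ∃ km : ℕ, ∃ h : km + 2 ≤ n + 1,
      x = Ideal.Quotient.mk (pathIdeal 𝕜 (n + 1))
        (X ⟨km, by omega⟩ * X ⟨km + 1, by omega⟩ ^ 2 +
          X ⟨km + 1, by omega⟩ ^ 2 * X ⟨km + 2, by omega⟩)} := by
  refine congrArg Ideal.span (Set.ext fun x => ⟨?_, ?_⟩)
  · rintro ⟨k, rfl⟩
    exact ⟨k, by omega, rfl⟩
  · rintro ⟨k, hk, rfl⟩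
    exact ⟨⟨k, by omega⟩, rfl⟩

end StanleyReisnerRing

/-- Lemma 5.3, second part: for the Stanley-Reisner ring `R` of the
path with `n ≥ 2` edges, with canonical ideal
`I_R = (x_k x_{k+1}² + x_{k+1}² x_{k+2} : 1 ≤ k ≤ n-1)` and non-zerodivisor
`g = ∑ x_k² x_{k+1}² ∈ I_R`, the elements `x₁²/g`, `x_{n+1}²/g` and
`(∑ x_j x_{j+1})/g` lie in `I_R⁻¹`; consequently all `xᵢ` lie in
`I_R·I_R⁻¹ = tr(ω_R)`, hence `R` is nearly Gorenstein. -/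
theorem path_nearlyGorenstein (𝕜 : Type*) [Field 𝕜] (n : ℕ) (hn : 2 ≤ n)
    (Ic : Ideal (MvPolynomial (Fin (n + 1)) 𝕜 ⧸ pathIdeal 𝕜 n))
    (hIc : Ic = Ideal.span {x | ∃ km : ℕ, ∃ h : km + 2 ≤ n,
      x = Ideal.Quotient.mk (pathIdeal 𝕜 n)
        (X (⟨km, by omega⟩ : Fin (n + 1)) * X (⟨km + 1, by omega⟩ : Fin (n + 1)) ^ 2 +
         X (⟨km + 1, by omega⟩ : Fin (n + 1)) ^ 2 * X (⟨km + 2, by omega⟩ : Fin (n + 1)))})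
    (g : MvPolynomial (Fin (n + 1)) 𝕜 ⧸ pathIdeal 𝕜 n)
    (hg : g = Ideal.Quotient.mk (pathIdeal 𝕜 n)
      (∑ k : Fin n, X k.castSucc ^ 2 * X k.succ ^ 2)) :
    -- `x₁²/g ∈ I_R⁻¹`:
    (∃ z : FractionRing (MvPolynomial (Fin (n + 1)) 𝕜 ⧸ pathIdeal 𝕜 n),
      z * algebraMap _ _ g = algebraMap _ _ (Ideal.Quotient.mk (pathIdeal 𝕜 n)
        (X (⟨0, by omega⟩ : Fin (n + 1)) ^ 2)) ∧ MemInv Ic z) ∧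
    -- `x_{n+1}²/g ∈ I_R⁻¹`:
    (∃ z : FractionRing (MvPolynomial (Fin (n + 1)) 𝕜 ⧸ pathIdeal 𝕜 n),
      z * algebraMap _ _ g = algebraMap _ _ (Ideal.Quotient.mk (pathIdeal 𝕜 n)
        (X (⟨n, by omega⟩ : Fin (n + 1)) ^ 2)) ∧ MemInv Ic z) ∧
    -- `(∑ⱼ x_j x_{j+1})/g ∈ I_R⁻¹`:
    (∃ z : FractionRing (MvPolynomial (Fin (n + 1)) 𝕜 ⧸ pathIdeal 𝕜 n),
      z * algebraMap _ _ g = algebraMap _ _ (Ideal.Quotient.mk (pathIdeal 𝕜 n)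
        (∑ j : Fin n, X j.castSucc * X j.succ)) ∧ MemInv Ic z) ∧
    -- all `xᵢ` lie in `tr(ω_R) = I_R·I_R⁻¹`:
    (∀ i : Fin (n + 1), Ideal.Quotient.mk (pathIdeal 𝕜 n) (X i) ∈ traceIdeal Ic) ∧
    -- hence `R` is nearly Gorenstein:
    (Ideal.span (Set.range (X : Fin (n + 1) → MvPolynomial (Fin (n + 1)) 𝕜))).map
      (Ideal.Quotient.mk (pathIdeal 𝕜 n)) ≤ traceIdeal Ic := by
  obtain ⟨n, rfl⟩ := Nat.exists_eq_add_of_le' hn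
  obtain rfl : Ic = canonicalIdeal (pathVar 𝕜 (n + 2)) :=
    hIc.trans (canonicalIdeal_pathVar 𝕜 (n + 1)).symm
  obtain rfl : g = edgePowSum (pathVar 𝕜 (n + 2)) 2 := hg.trans (edgePowSum_pathVar 𝕜 _ 2).symm
  have hsum : edgePowSum (pathVar 𝕜 (n + 2)) 1 = Ideal.Quotient.mk (pathIdeal 𝕜 (n + 2))
      (∑ j : Fin (n + 2), X j.castSucc * X j.succ) := by
    rw [edgePowSum_pathVar]
    simp only [edgePowSum, pow_one]
  have hx := pathRelations_pathVar 𝕜 (n + 2)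
  have hg := edgePowSum_pathVar_mem_nonZeroDivisors 𝕜 (n + 1) two_ne_zero
  have htrace := hx.mem_traceIdeal hg
  refine ⟨⟨_, IsLocalization.mk'_spec _ _ _, hx.memInv_first_sq_div hg⟩,
    ⟨_, IsLocalization.mk'_spec _ _ _, hx.memInv_last_sq_div hg⟩,
    ⟨_, hsum ▸ IsLocalization.mk'_spec _ _ _, hx.memInv_edgePowSum_one_div hg⟩, htrace, ?_⟩
  rw [Ideal.map_span, Ideal.span_le]
  rintro _ ⟨_, ⟨i, rfl⟩, rfl⟩
  exact htrace i

end
end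

section
/- Let $S$ be a pointed affine semigroup of dimension $d$ such that $\Bbbk[S]$ is Cohen-Macaulay, let $v, v' \in \mathbb{Z}S$ with $v' - v \in \overline{S} \setminus S$ (a hole), where $\overline{S} = \mathbb{Z}S \cap \mathbb{R}_{\geq 0}S$. Then there exists an extremal ray $l$ of $S$ such that $(v' - v) + a \notin S$ for some $a \in l$; more precisely, there is a facet $F$ of $S$ with $((v' - v) + \mathbb{Z}F) \cap S = \emptyset$. -/
noncomputable section
/-- Coercion `ℤⁿ → ℚⁿ`. -/
def intVecToRat {n : ℕ} (a : Fin n → ℤ) : Fin n → ℚ := fun i => (a i : ℚ)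

/-- `F` is a face of the affine semigroup `S`. -/
def IsFaceOfSemigroup {n : ℕ} (S : AddSubmonoid (Fin n → ℤ)) (F : Set (Fin n → ℤ)) : Prop :=
  F ⊆ (S : Set (Fin n → ℤ)) ∧ (0 : Fin n → ℤ) ∈ F ∧
    ∀ a ∈ S, ∀ b ∈ S, (a + b ∈ F ↔ a ∈ F ∧ b ∈ F)

/-- The dimension of a subset of `ℤⁿ`: the rank of the rational vector space it
spans. -/
def zdim {n : ℕ} (F : Set (Fin n → ℤ)) : ℕ :=
  Module.finrank ℚ (Submodule.span ℚ (intVecToRat '' F))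

/-- The maximal monomial ideal of the affine semigroup ring `k[S]`. -/
def sgMaxIdealZ (k : Type*) [Field k] {n : ℕ} (S : AddSubmonoid (Fin n → ℤ)) :
    Ideal (AddMonoidAlgebra k ↥S) :=
  Ideal.span {x | ∃ s : ↥S, s ≠ 0 ∧ x = AddMonoidAlgebra.single s (1 : k)}

/-!
Write `u = v' - v` as `s - t` with `s, t ∈ S`. The monomials `x^i` with `u + i ∈ S` span the colon
ideal `(x^t : x^s)` of `k[S]`, which lies in the prime ideal of the face `{0}` because `u ∉ S`. The
localization of `k[S]` at this prime is Cohen-Macaulay, so the principal ideal `(x^t)` is unmixed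
there, and the colon ideal is contained in a prime `p` of height at most one. The monomials outside
`p` form a proper face of `S`, and every proper face lies in a facet `F`: modulo the span of a face,
`S` generates a salient cone, and an extremal ray of this cone gives a face of one dimension more.
Comparing heights, `p` is spanned by the monomials outside `F`. Hence `u + i ∉ S` for all `i ∈ F`,
and then for all `i ∈ ℤF`.
-/

section RegularSequences

open IsLocalRing RingTheory.Sequence CategoryTheory Abelian
open scoped Pointwise

universe u v

theorem ideal_smul_top_quotSMulTop_ne_top {R : Type*} [CommRing R] {M : Type*} [AddCommGroup M]
    [Module R M] {I : Ideal R} {a : R} (ha : a ∈ I) (hI : I • (⊤ : Submodule R M) ≠ ⊤) :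
    I • (⊤ : Submodule R (QuotSMulTop a M)) ≠ ⊤ := fun h => by
  have hcomap := congrArg (Submodule.comap (a • (⊤ : Submodule R M)).mkQ) h
  have hle : a • (⊤ : Submodule R M) ≤ I • ⊤ := by
    rw [← Submodule.ideal_span_singleton_smul]
    exact Submodule.smul_mono_left ((Ideal.span_singleton_le_iff_mem I).2 ha)
  rw [Submodule.comap_smul_top_of_surjective I _ (Submodule.mkQ_surjective _), Submodule.ker_mkQ,
    sup_eq_left.2 hle, Submodule.comap_top] at hcomap
  exact hI hcomap

/- By Rees' theorem depth is measured by the vanishing of `Ext (R ⧸ I) M`, and the long exact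
sequence of `0 → M → M → M ⧸ aM → 0` loses at most one degree of it. -/
theorem exists_isRegular_quotSMulTop {R : Type u} [CommRing R] [Small.{v} R] [IsNoetherianRing R]
    {M : Type v} [AddCommGroup M] [Module R M] [Module.Finite R M] {I : Ideal R}
    (hI : I • (⊤ : Submodule R M) ≠ ⊤) {a : R} (haI : a ∈ I) (ha : IsSMulRegular M a)
    {rs : List R} (hrsI : ∀ r ∈ rs, r ∈ I) (hrs : IsRegular M rs) :
    ∃ rs' : List R, rs'.length = rs.length - 1 ∧ (∀ r ∈ rs', r ∈ I) ∧
      IsRegular (QuotSMulTop a M) rs' := by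
  let N : ModuleCat.{v} R := .of R (Shrink.{v} (R ⧸ I))
  have hext : ∀ i < rs.length, Subsingleton (Ext N (.of R M) i) :=
    ((ModuleCat.exists_isRegular_tfae I rs.length (.of R M) hI.lt_top).out 3 1 rfl rfl).1
      ⟨rs, rfl, hrsI, hrs⟩
  have hext' : ∀ i < rs.length - 1, Subsingleton (Ext N (.of R (QuotSMulTop a M)) i) := by
    intro i hi
    have h₁ := AddCommGrpCat.isZero_of_iff_subsingleton.2 (hext i (by omega))
    have h₂ := AddCommGrpCat.isZero_of_iff_subsingleton.2 (hext (i + 1) (by omega))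
    have ha' : IsSMulRegular (ModuleCat.of R M) a := ha
    exact AddCommGrpCat.subsingleton_of_isZero <| ShortComplex.Exact.isZero_of_both_zeros
      (Ext.covariant_sequence_exact₃' N ha'.smulShortComplex_shortExact i (i + 1) rfl)
      (h₁.eq_zero_of_src _) (h₂.eq_zero_of_tgt _)
  exact ((ModuleCat.exists_isRegular_tfae I (rs.length - 1) (.of R (QuotSMulTop a M))
    (ideal_smul_top_quotSMulTop_ne_top haI hI).lt_top).out 1 3 rfl rfl).1 hext'

variable {A : Type*} [CommRing A] [IsLocalRing A] [IsNoetherianRing A]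
  {M : Type*} [AddCommGroup M] [Module A M] [Module.Finite A M]

theorem torsionBySet_not_le_smul_top {I : Ideal A} {x : A} (hx : x ∈ maximalIdeal A)
    (hreg : IsSMulRegular M x) (hI : Submodule.torsionBySet A M I ≠ ⊥) :
    ¬ Submodule.torsionBySet A M I ≤ x • ⊤ := by
  intro hle
  refine hI (Submodule.eq_bot_of_le_smul_of_le_jacobson_bot (Ideal.span {x}) _
    (IsNoetherian.noetherian _) (fun w hw => ?_) ?_)
  · obtain ⟨y, -, rfl⟩ := Submodule.mem_smul_pointwise_iff_exists _ _ _ |>.1 (hle hw)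
    refine Submodule.smul_mem_smul (Ideal.mem_span_singleton_self x) ?_
    rw [Submodule.mem_torsionBySet_iff] at hw ⊢
    exact fun c => hreg.right_eq_zero_of_smul (by rw [smul_comm, hw c])
  · exact ((Ideal.span_singleton_le_iff_mem _).2 hx).trans (maximalIdeal_le_jacobson _)

theorem exists_isAssociatedPrime_quotSMulTop {p : Ideal A} (hp : IsAssociatedPrime p M) {x : A}
    (hx : x ∈ maximalIdeal A) (hreg : IsSMulRegular M x) :
    ∃ q, IsAssociatedPrime q (QuotSMulTop x M) ∧ p ⊔ Ideal.span {x} ≤ q := by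
  obtain ⟨hprime, z, rfl⟩ := isAssociatedPrime_iff.1 hp
  set p := (⊥ : Submodule A M).colon {z}
  have hne : Submodule.torsionBySet A M p ≠ ⊥ := fun h => by
    have hz : z ∈ Submodule.torsionBySet A M p := (Submodule.mem_torsionBySet_iff _ _).2
      fun c => Submodule.mem_colon_singleton.1 c.2
    rw [h, Submodule.mem_bot] at hz
    exact hprime.ne_top (by simp [p, hz])
  obtain ⟨w, hwp, hwx⟩ := SetLike.not_le_iff_exists.1 (torsionBySet_not_le_smul_top hx hreg hne)
  rw [Submodule.mem_torsionBySet_iff] at hwp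
  obtain ⟨q, hq, hle⟩ := exists_le_isAssociatedPrime_of_isNoetherianRing A
    (Submodule.Quotient.mk w : QuotSMulTop x M) ((Submodule.Quotient.mk_eq_zero _).not.2 hwx)
  refine ⟨q, hq, (sup_le (fun c hc => ?_) ?_).trans hle⟩
  · rw [Submodule.mem_colon_singleton, ← Submodule.Quotient.mk_smul, hwp ⟨c, hc⟩]
    exact Submodule.zero_mem _
  · rw [Ideal.span_singleton_le_iff_mem, Submodule.mem_colon_singleton,
      ← Submodule.Quotient.mk_smul, Submodule.mem_bot, Submodule.Quotient.mk_eq_zero]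
    exact Submodule.smul_mem_pointwise_smul _ _ _ trivial

theorem height_add_length_le_of_isAssociatedPrime {p : Ideal A} (hp : IsAssociatedPrime p M)
    {rs : List A} (hmem : ∀ x ∈ rs, x ∈ maximalIdeal A) (hrs : IsWeaklyRegular M rs) :
    p.height + rs.length ≤ (maximalIdeal A).height := by
  induction rs generalizing M p with
  | nil => simpa using Ideal.height_mono (le_maximalIdeal hp.isPrime.ne_top)
  | cons x rs ih =>
    rw [List.forall_mem_cons] at hmem
    rw [isWeaklyRegular_cons_iff] at hrs
    have hxp : x ∉ p := fun hx =>
      (biUnion_associatedPrimes_eq_compl_regular A M).le (Set.mem_biUnion hp hx) hrs.1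
    obtain ⟨q, hq, hle⟩ := exists_isAssociatedPrime_quotSMulTop hp hmem.1 hrs.1
    have hlt : p < q := (le_sup_left.trans hle).lt_of_ne fun h =>
      hxp (h ▸ hle (Ideal.mem_sup_right (Ideal.mem_span_singleton_self x)))
    have := hp.isPrime
    have := hq.isPrime
    calc p.height + (x :: rs).length = p.height + 1 + rs.length := by
          rw [List.length_cons, Nat.cast_succ, add_assoc, add_comm 1]
      _ ≤ q.height + rs.length := by
          gcongr
          exact Ideal.height_add_one_le_of_lt_of_isPrime hlt
      _ ≤ (maximalIdeal A).height := ih hq hmem.2 hrs.2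

theorem height_le_one_of_isAssociatedPrime_quotSMulTop {rs : List A}
    (hmem : ∀ x ∈ rs, x ∈ maximalIdeal A) (hrs : IsWeaklyRegular A rs)
    (hlen : (maximalIdeal A).height ≤ rs.length) {a : A} (ha : IsSMulRegular A a) {p : Ideal A}
    (hp : IsAssociatedPrime p (QuotSMulTop a A)) : p.height ≤ 1 := by
  have := hp.isPrime
  have hap : a ∈ p := hp.annihilator_le <| by
    rw [Submodule.annihilator_top]
    exact QuotSMulTop.mem_annihilator _ a
  have ham : a ∈ maximalIdeal A := le_maximalIdeal this.ne_top hap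
  have hm : maximalIdeal A • (⊤ : Submodule A A) ≠ ⊤ := by
    simpa using (maximalIdeal.isMaximal A).ne_top
  obtain ⟨rs', hlen', hmem', hrs'⟩ := exists_isRegular_quotSMulTop hm ham ha hmem
    ((isRegular_iff_isWeaklyRegular_of_subset_maximalIdeal hmem).2 hrs)
  have hle := height_add_length_le_of_isAssociatedPrime hp hmem' hrs'.toIsWeaklyRegular
  have hbound : p.height + rs'.length ≤ 1 + rs'.length := hle.trans <| hlen.trans <| by
    norm_cast
    omega
  exact (ENat.add_le_add_iff_right (ENat.natCast_ne_top _)).1 hbound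

end RegularSequences

section CohenMacaulay

open IsLocalRing RingTheory.Sequence

variable {R : Type*} [CommRing R]

theorem IsRegularSeq.isWeaklyRegular {l : List R} (h : IsRegularSeq l) : IsWeaklyRegular R l := by
  refine ⟨fun i hi => (isSMulRegular_quotient_iff_mem_of_smul_mem _ _).2 fun x hx => ?_⟩
  rw [smul_eq_mul, Ideal.mul_top] at hx ⊢
  rw [smul_eq_mul, mul_comm] at hx
  exact h.1 i hi x hx

theorem IsCMWrt.exists_isWeaklyRegular_localization {m P : Ideal R} [P.IsPrime] (hm : IsCMWrt m)
    (hmP : m ≤ P) :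
    ∃ rs : List (Localization.AtPrime P), (∀ x ∈ rs, x ∈ maximalIdeal (Localization.AtPrime P)) ∧
      IsWeaklyRegular (Localization.AtPrime P) rs ∧
      (maximalIdeal (Localization.AtPrime P)).height ≤ rs.length := by
  obtain ⟨l, hlm, hl, hdim⟩ := hm
  refine ⟨l.map (algebraMap R _), fun x hx => ?_,
    hl.isWeaklyRegular.of_isLocalization _ P.primeCompl, ?_⟩
  · obtain ⟨y, hy, rfl⟩ := List.mem_map.1 hx
    exact (IsLocalization.AtPrime.to_map_mem_maximal_iff _ P y).2 (hmP (hlm y hy))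
  · rw [List.length_map, ← WithBot.coe_le_coe, maximalIdeal_height_eq_ringKrullDim,
      IsLocalization.AtPrime.ringKrullDim_eq_height P]
    exact (Ideal.height_le_ringKrullDim_of_ne_top ‹P.IsPrime›.ne_top).trans_eq hdim.symm

/- A Cohen-Macaulay local ring is unmixed, so the associated primes of `a` have height one. -/
theorem IsCMWrt.exists_isPrime_height_le_one [IsNoetherianRing R] {m P : Ideal R} [P.IsPrime]
    (hm : IsCMWrt m) (hmP : m ≤ P) {a b : R} (ha : IsSMulRegular R a)
    (hab : (Ideal.span {a}).colon {b} ≤ P) :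
    ∃ p : Ideal R, p.IsPrime ∧ p.height ≤ 1 ∧ (Ideal.span {a}).colon {b} ≤ p := by
  let A := Localization.AtPrime P
  obtain ⟨rs, hmem, hrs, hlen⟩ := hm.exists_isWeaklyRegular_localization hmP
  have hmk (x : A) :
      (Submodule.Quotient.mk x : QuotSMulTop (algebraMap R A a) A) = 0 ↔ algebraMap R A a ∣ x := by
    rw [Submodule.Quotient.mk_eq_zero, Submodule.mem_smul_pointwise_iff_exists]
    simp [dvd_iff_exists_eq_mul_right, eq_comm]
  have hb : ¬ algebraMap R A a ∣ algebraMap R A b := by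
    rw [← Ideal.mem_span_singleton, ← Set.image_singleton, ← Ideal.map_span,
      IsLocalization.algebraMap_mem_map_algebraMap_iff P.primeCompl]
    rintro ⟨c, hcP, hc⟩
    exact hcP (hab (Submodule.mem_colon_singleton.2 hc))
  obtain ⟨q, hq, hle⟩ := exists_le_isAssociatedPrime_of_isNoetherianRing A _
    ((hmk (algebraMap R A b)).not.2 hb)
  have := hq.isPrime
  refine ⟨q.under R, inferInstance, ?_, fun c hc => hle ?_⟩
  · rw [IsLocalization.height_under P.primeCompl]
    exact height_le_one_of_isAssociatedPrime_quotSMulTop hmem hrs hlen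
      (ha.of_isLocalization A P.primeCompl) hq
  · rw [Submodule.mem_colon_singleton, Ideal.mem_span_singleton] at hc
    rw [Submodule.mem_colon_singleton, ← Submodule.Quotient.mk_smul, Submodule.mem_bot, hmk,
      smul_eq_mul, ← map_mul]
    exact map_dvd _ hc

end CohenMacaulay

section Cones

open PointedCone

theorem isFaceOf_hull_singleton {K V : Type*} [Field K] [LinearOrder K] [IsStrictOrderedRing K]
    [AddCommGroup V] [Module K V] {T : Set V} {g : V}
    (hsal : (hull K (insert g T) : ConvexCone K V).Salient) (hg : g ∉ hull K T) :
    (hull K {g}).IsFaceOf (hull K (insert g T)) := by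
  have hTg : hull K T ≤ hull K (insert g T) := Submodule.span_mono (Set.subset_insert g T)
  have hgg : g ∈ hull K (insert g T) := subset_hull (Set.mem_insert g T)
  refine .of_mem_of_add_mem_left (Submodule.span_mono (by simp)) fun {a b} ha hb hab => ?_
  obtain ⟨α, x, hx, rfl⟩ := Submodule.mem_span_insert.1 ha
  obtain ⟨β, y, hy, rfl⟩ := Submodule.mem_span_insert.1 hb
  obtain ⟨γ, hγ⟩ := Submodule.mem_span_singleton.1 hab
  have hxy : x + y = ((γ : K) - α - β) • g := by
    have hγ' : (γ : K) • g = (α : K) • g + x + ((β : K) • g + y) := hγ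
    linear_combination (norm := module) -hγ'
  obtain hle | hlt := le_or_gt ((γ : K) - α - β) 0
  · have hneg : -x ∈ hull K (insert g T) := by
      have : -x = (-((γ : K) - α - β)) • g + y := by
        linear_combination (norm := module) -hxy
      rw [this]
      exact add_mem (PointedCone.smul_mem _ (neg_nonneg.2 hle) hgg) (hTg hy)
    have hx0 : x = 0 := by_contra fun h => hsal x (hTg hx) h hneg
    rw [hx0, add_zero]
    exact Submodule.smul_mem _ _ (Submodule.mem_span_singleton_self g)
  · refine absurd ((PointedCone.smul_mem_iff _ hlt).1 ?_) hg
    rw [← hxy]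
    exact add_mem hx hy

theorem exists_isFaceOf_hull_singleton {K V : Type*} [Field K] [LinearOrder K]
    [IsStrictOrderedRing K] [AddCommGroup V] [Module K V] {G : Finset V}
    (hsal : (hull K (G : Set V) : ConvexCone K V).Salient) (hne : hull K (G : Set V) ≠ ⊥) :
    ∃ g ∈ G, g ≠ 0 ∧ (hull K {g}).IsFaceOf (hull K (G : Set V)) := by
  classical
  obtain ⟨T, hTG, hT, hmin⟩ := exists_minimal_le_of_wellFoundedLT
    (fun T : Finset V => hull K (T : Set V) = hull K G) G rfl
  obtain ⟨g, hgT⟩ : T.Nonempty := by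
    rw [Finset.nonempty_iff_ne_empty]
    rintro rfl
    exact hne (by simpa using hT.symm)
  have hinsert : insert g (T.erase g : Set V) = T := by
    rw [← Finset.coe_insert, Finset.insert_erase hgT]
  have hg : g ∉ hull K (T.erase g : Set V) := fun hg => by
    refine Finset.notMem_erase g T (hmin ?_ (Finset.erase_subset g T) hgT)
    rw [← hT, ← hinsert]
    exact (Submodule.span_insert_eq_span hg).symm
  refine ⟨g, hTG hgT, fun h => hg (h ▸ zero_mem _), ?_⟩
  rw [← hT, ← hinsert] at hsal ⊢
  exact isFaceOf_hull_singleton hsal hg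

end Cones

section Denominators

theorem exists_eq_sub_of_mem_closure {M : Type*} [AddCommGroup M] {N : AddSubmonoid M} {z : M}
    (hz : z ∈ AddSubgroup.closure (N : Set M)) : ∃ a ∈ N, ∃ b ∈ N, z = a - b := by
  induction hz using AddSubgroup.closure_induction with
  | mem x hx => exact ⟨x, hx, 0, N.zero_mem, (sub_zero x).symm⟩
  | zero => exact ⟨0, N.zero_mem, 0, N.zero_mem, (sub_zero 0).symm⟩
  | add x y _ _ hx hy =>
    obtain ⟨a, ha, b, hb, rfl⟩ := hx
    obtain ⟨c, hc, e, he, rfl⟩ := hy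
    exact ⟨a + c, N.add_mem ha hc, b + e, N.add_mem hb he, by abel⟩
  | neg x _ hx =>
    obtain ⟨a, ha, b, hb, rfl⟩ := hx
    exact ⟨b, hb, a, ha, neg_sub a b⟩

variable {V : Type*} [AddCommGroup V] [Module ℚ V]

theorem exists_nsmul_eq_of_mem_hull_image {M : Type*} [AddCommMonoid M] {S : AddSubmonoid M}
    (f : M →+ V) {x : V} (hx : x ∈ PointedCone.hull ℚ (f '' S)) :
    ∃ N : ℕ, 0 < N ∧ ∃ s ∈ S, N • x = f s := by
  induction hx using Submodule.span_induction with
  | mem x hx =>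
    obtain ⟨s, hs, rfl⟩ := hx
    exact ⟨1, one_pos, s, hs, one_nsmul _⟩
  | zero => exact ⟨1, one_pos, 0, S.zero_mem, by rw [smul_zero, map_zero]⟩
  | add x y _ _ hx hy =>
    obtain ⟨N, hN, s, hs, hxs⟩ := hx
    obtain ⟨M, hM, t, ht, hyt⟩ := hy
    refine ⟨N * M, Nat.mul_pos hN hM, M • s + N • t,
      S.add_mem (S.nsmul_mem hs M) (S.nsmul_mem ht N), ?_⟩
    rw [map_add, map_nsmul, map_nsmul, ← hxs, ← hyt, smul_add, mul_nsmul, mul_nsmul']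
  | smul q x _ hx =>
    obtain ⟨N, hN, s, hs, hxs⟩ := hx
    obtain ⟨c, hc⟩ := Int.eq_ofNat_of_zero_le (Rat.num_nonneg.2 q.2)
    have hq : (q : ℚ).den * (q : ℚ) = (c : ℚ) := by
      rw [Rat.den_mul_eq_num, hc, Int.cast_natCast]
    refine ⟨(q : ℚ).den * N, Nat.mul_pos (q : ℚ).den_pos hN, c • s, S.nsmul_mem hs c, ?_⟩
    calc ((q : ℚ).den * N) • q • x = (((q : ℚ).den * q : ℚ) * N) • x := by
          rw [← Nat.cast_smul_eq_nsmul ℚ, show q • x = (q : ℚ) • x from rfl, smul_smul]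
          push_cast
          ring_nf
      _ = f (c • s) := by
          rw [hq, map_nsmul, ← hxs, mul_smul, Nat.cast_smul_eq_nsmul, Nat.cast_smul_eq_nsmul]

theorem exists_nsmul_mem_closure_of_map_mem_span_image {M : Type*} [AddCommGroup M] {f : M →+ V}
    (hf : Function.Injective f) {H : Set M} {s : M} (hs : f s ∈ Submodule.span ℚ (f '' H)) :
    ∃ N : ℕ, 0 < N ∧ N • s ∈ AddSubgroup.closure H := by
  obtain ⟨y, hy, z, hz⟩ := (IsLocalization.mem_span_iff (R := ℤ) (nonZeroDivisors ℤ)).1 hs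
  have hzy : (z : ℤ) • f s = y := by
    rw [hz, ← Int.cast_smul_eq_zsmul ℚ, smul_smul, ← eq_intCast (algebraMap ℤ ℚ),
      IsLocalization.mk'_spec', map_one, one_smul]
  have hzs : (z : ℤ) • s ∈ AddSubgroup.closure H := by
    rw [← AddSubgroup.mem_map_iff_mem hf, AddMonoidHom.map_closure, map_zsmul, hzy]
    rwa [← Submodule.mem_toAddSubgroup, Submodule.span_int_eq_addSubgroupClosure] at hy
  refine ⟨(z : ℤ).natAbs, Int.natAbs_pos.2 (nonZeroDivisors.coe_ne_zero z), ?_⟩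
  obtain h | h := (z : ℤ).natAbs_eq
  · rwa [h, natCast_zsmul] at hzs
  · rwa [h, neg_smul, neg_mem_iff, natCast_zsmul] at hzs

end Denominators

section Faces

open PointedCone

variable {n : ℕ} {S : AddSubmonoid (Fin n → ℤ)} {H : Set (Fin n → ℤ)}

/-- A face of `S` as a submonoid of `ℤⁿ`. -/
def IsFaceOfSemigroup.toAddSubmonoid (hH : IsFaceOfSemigroup S H) :
    AddSubmonoid (Fin n → ℤ) where
  carrier := H
  zero_mem' := hH.2.1
  add_mem' ha hb := (hH.2.2 _ (hH.1 ha) _ (hH.1 hb)).2 ⟨ha, hb⟩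

theorem isFaceOfSemigroup_zero (hS : ∀ a ∈ S, -a ∈ S → a = 0) : IsFaceOfSemigroup S {0} := by
  refine ⟨by simp, rfl, fun a ha b hb => ⟨fun hab => ?_, ?_⟩⟩
  · have hba : b = -a := eq_neg_of_add_eq_zero_right hab
    have ha0 : a = 0 := hS a ha (hba ▸ hb)
    exact ⟨ha0, by rw [hba, ha0, neg_zero]; rfl⟩
  · rintro ⟨rfl, rfl⟩
    exact add_zero 0

theorem isFaceOfSemigroup_of_isFaceOf_hull_image {V : Type*} [AddCommGroup V] [Module ℚ V]
    (f : (Fin n → ℤ) →+ V) {C : PointedCone ℚ V} (hC : C.IsFaceOf (hull ℚ (f '' S))) :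
    IsFaceOfSemigroup S {s | s ∈ S ∧ f s ∈ C} := by
  refine ⟨fun s hs => hs.1, ⟨S.zero_mem, (map_zero f).symm ▸ C.zero_mem⟩, fun a ha b hb => ?_⟩
  have hab := hC.add_mem_iff_mem (subset_hull (Set.mem_image_of_mem f ha))
    (subset_hull (Set.mem_image_of_mem f hb))
  simp only [Set.mem_ofPred_eq, map_add, hab, ha, hb, S.add_mem ha hb, true_and]

/-- `intVecToRat` as an additive homomorphism. -/
def intVecToRatHom (n : ℕ) : (Fin n → ℤ) →+ (Fin n → ℚ) := (Int.castAddHom ℚ).compLeft (Fin n)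

theorem coe_intVecToRatHom (n : ℕ) : ⇑(intVecToRatHom n) = intVecToRat := rfl

theorem intVecToRat_injective (n : ℕ) : Function.Injective (intVecToRat (n := n)) :=
  Int.cast_injective.comp_left

theorem zdim_zero : zdim ({0} : Set (Fin n → ℤ)) = 0 := by
  rw [zdim, Set.image_singleton, ← coe_intVecToRatHom, map_zero, Submodule.span_zero_singleton,
    finrank_bot]

theorem IsFaceOfSemigroup.mem_of_add_mem_span (hH : IsFaceOfSemigroup S H) {s t : Fin n → ℤ}
    (hs : s ∈ S) (ht : t ∈ S) (hst : intVecToRat (s + t) ∈ Submodule.span ℚ (intVecToRat '' H)) :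
    s ∈ H := by
  obtain ⟨N, hN, hmem⟩ := exists_nsmul_mem_closure_of_map_mem_span_image
    (f := intVecToRatHom n) (intVecToRat_injective n) hst
  obtain ⟨a, ha, b, hb, hab⟩ := exists_eq_sub_of_mem_closure (N := hH.toAddSubmonoid) hmem
  obtain ⟨m, rfl⟩ := Nat.exists_eq_succ_of_ne_zero hN.ne'
  have ha' : s + (m • (s + t) + t + b) = a := by
    rw [eq_sub_iff_add_eq, succ_nsmul] at hab
    rw [← hab]
    abel
  exact ((hH.2.2 s hs _ (S.add_mem (S.add_mem (S.nsmul_mem (S.add_mem hs ht) m) ht)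
    (hH.1 hb))).1 (ha' ▸ ha)).1

/-- The projection `ℤⁿ → ℚⁿ / ℚH`. It maps an affine semigroup with face `H` to a salient cone
whose rays correspond to the faces of one dimension more than `H`. -/
def modSpan (H : Set (Fin n → ℤ)) :
    (Fin n → ℤ) →+ (Fin n → ℚ) ⧸ Submodule.span ℚ (intVecToRat '' H) :=
  (Submodule.mkQ _).toAddMonoidHom.comp (intVecToRatHom n)

theorem modSpan_eq_zero_iff {s : Fin n → ℤ} :
    modSpan H s = 0 ↔ intVecToRat s ∈ Submodule.span ℚ (intVecToRat '' H) :=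
  Submodule.Quotient.mk_eq_zero _

theorem modSpan_eq_zero_of_mem {s : Fin n → ℤ} (hs : s ∈ H) : modSpan H s = 0 :=
  modSpan_eq_zero_iff.2 (Submodule.subset_span (Set.mem_image_of_mem _ hs))

theorem IsFaceOfSemigroup.mem_of_modSpan_add_eq_zero (hH : IsFaceOfSemigroup S H)
    {s t : Fin n → ℤ} (hs : s ∈ S) (ht : t ∈ S) (hst : modSpan H (s + t) = 0) : s ∈ H :=
  hH.mem_of_add_mem_span hs ht (modSpan_eq_zero_iff.1 hst)

theorem IsFaceOfSemigroup.salient_hull_modSpan (hH : IsFaceOfSemigroup S H) :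
    (hull ℚ (modSpan H '' S) :
      ConvexCone ℚ ((Fin n → ℚ) ⧸ Submodule.span ℚ (intVecToRat '' H))).Salient := by
  intro x hx hx0 hnx
  obtain ⟨N, hN, s, hs, hxs⟩ := exists_nsmul_eq_of_mem_hull_image (modSpan H) hx
  obtain ⟨M, hM, t, ht, hxt⟩ := exists_nsmul_eq_of_mem_hull_image (modSpan H) hnx
  have hsum : modSpan H (M • s + N • t) = 0 := by
    rw [map_add, map_nsmul, map_nsmul, ← hxs, ← hxt, smul_neg, smul_neg, smul_comm,
      add_neg_cancel]
  have hMs := modSpan_eq_zero_of_mem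
    (hH.mem_of_modSpan_add_eq_zero (S.nsmul_mem hs M) (S.nsmul_mem ht N) hsum)
  rw [map_nsmul, ← hxs, smul_smul, ← Nat.cast_smul_eq_nsmul ℚ, smul_eq_zero] at hMs
  exact hMs.elim (by positivity) hx0

theorem zdim_setOf_modSpan_mem_hull_singleton {s : Fin n → ℤ} (hH : H ⊆ S) (hs : s ∈ S)
    (hsH : modSpan H s ≠ 0) :
    zdim {t | t ∈ S ∧ modSpan H t ∈ hull ℚ {modSpan H s}} = zdim H + 1 := by
  have hspan : Submodule.span ℚ (intVecToRat '' {t | t ∈ S ∧ modSpan H t ∈ hull ℚ {modSpan H s}}) =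
      Submodule.span ℚ (intVecToRat '' H) ⊔ Submodule.span ℚ {intVecToRat s} := by
    apply le_antisymm
    · rw [Submodule.span_le]
      rintro _ ⟨t, ⟨-, ht⟩, rfl⟩
      rw [SetLike.mem_coe, ← Submodule.comap_map_mkQ, Submodule.map_span, Set.image_singleton]
      exact hull_le_span ℚ _ ht
    · refine sup_le (Submodule.span_mono (Set.image_mono fun t ht => ⟨hH ht, ?_⟩))
        (Submodule.span_mono (Set.singleton_subset_iff.2 ⟨s, ⟨hs, ?_⟩, rfl⟩))
      · rw [modSpan_eq_zero_of_mem ht]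
        exact zero_mem _
      · exact subset_hull rfl
  rw [zdim, hspan, Submodule.finrank_sup_span_singleton (modSpan_eq_zero_iff.not.1 hsH), zdim]

theorem IsFaceOfSemigroup.exists_zdim_eq_add_one (hH : IsFaceOfSemigroup S H) (hS : S.FG)
    (hne : H ≠ S) : ∃ H', IsFaceOfSemigroup S H' ∧ H ⊆ H' ∧ zdim H' = zdim H + 1 := by
  classical
  obtain ⟨G, hG⟩ := hS
  have hhull : hull ℚ (G.image (modSpan H) : Set _) = hull ℚ (modSpan H '' S) := by
    rw [← hG, ← AddSubmonoid.coe_map, AddMonoidHom.map_mclosure, hull, hull,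
      Submodule.span_closure, Finset.coe_image]
  have hbot : hull ℚ (modSpan H '' S) ≠ ⊥ := fun h => hne <| hH.1.antisymm fun s hs => by
    refine hH.mem_of_modSpan_add_eq_zero hs S.zero_mem ?_
    have hs' := subset_hull (R := ℚ) (Set.mem_image_of_mem (modSpan H) hs)
    rwa [SetLike.mem_coe, h, Submodule.mem_bot, ← add_zero s] at hs'
  obtain ⟨g, hg, hg0, hface⟩ := exists_isFaceOf_hull_singleton (G := G.image (modSpan H))
    (hhull ▸ hH.salient_hull_modSpan) (hhull ▸ hbot)
  obtain ⟨s, hsG, rfl⟩ := Finset.mem_image.1 hg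
  have hs : s ∈ S := hG ▸ AddSubmonoid.subset_closure hsG
  exact ⟨_, isFaceOfSemigroup_of_isFaceOf_hull_image (modSpan H) (hhull ▸ hface),
    fun t ht => ⟨hH.1 ht, (modSpan_eq_zero_of_mem ht).symm ▸ zero_mem _⟩,
    zdim_setOf_modSpan_mem_hull_singleton hH.1 hs hg0⟩

theorem zdim_le (H : Set (Fin n → ℤ)) : zdim H ≤ n :=
  (Submodule.finrank_le _).trans_eq (Module.finrank_fin_fun ℚ)

theorem IsFaceOfSemigroup.exists_facet {H : Set (Fin n → ℤ)} (hH : IsFaceOfSemigroup S H)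
    (hS : S.FG) (hne : H ≠ S) :
    ∃ F, IsFaceOfSemigroup S F ∧ H ⊆ F ∧ F ≠ S ∧ zdim F + 1 = zdim (S : Set (Fin n → ℤ)) := by
  obtain ⟨H', hH', hHH', hdim⟩ := hH.exists_zdim_eq_add_one hS hne
  obtain hH'S | hne' := eq_or_ne H' S
  · exact ⟨H, hH, subset_rfl, hne, by rw [← hdim, hH'S]⟩
  · obtain ⟨F, hF, hH'F, hFS⟩ := hH'.exists_facet hS hne'
    exact ⟨F, hF, hHH'.trans hH'F, hFS⟩
termination_by n - zdim H
decreasing_by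
  have := zdim_le H'
  omega

end Faces

theorem eq_of_le_of_height_le_one {R : Type*} [CommRing R] [IsDomain R]
    {p q : Ideal R} [p.IsPrime] [q.IsPrime] (hq : q ≠ ⊥) (hqp : q ≤ p) (hp : p.height ≤ 1) :
    q = p := by
  by_contra hne
  have hlt : q < p := hqp.lt_of_ne hne
  have hchain : (1 + 1 : ℕ∞) ≤ 1 := calc
    (1 + 1 : ℕ∞) ≤ q.height + 1 := by
      gcongr
      exact le_add_self.trans (Ideal.height_add_one_le_of_lt_of_isPrime (bot_lt_iff_ne_bot.2 hq))
    _ ≤ p.height := Ideal.height_add_one_le_of_lt_of_isPrime hlt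
    _ ≤ 1 := hp
  exact absurd hchain (by decide)

section SemigroupRing

open AddMonoidAlgebra

theorem mem_ideal_of_forall_single_mem {k M : Type*} [Semiring k] [AddMonoid M]
    {f : AddMonoidAlgebra k M} {J : Ideal (AddMonoidAlgebra k M)}
    (h : ∀ s, f.coeff s ≠ 0 → single s (1 : k) ∈ J) : f ∈ J := by
  rw [← sum_coeff_single f]
  refine J.sum_mem fun s hs => ?_
  have hsingle : single s (f.coeff s) = single 0 (f.coeff s) * single s (1 : k) := by
    rw [single_mul_single, zero_add, mul_one]
  rw [hsingle]
  exact J.mul_mem_left _ (h s (Finsupp.mem_support_iff.1 hs))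

theorem mem_colon_single_iff {k M : Type*} [CommRing k] [AddCommGroup M] {S : AddSubmonoid M}
    {s t : S} {f : AddMonoidAlgebra k S} :
    f ∈ (Ideal.span {single t (1 : k)}).colon {single s (1 : k)} ↔
      ∀ i, f.coeff i ≠ 0 → (s : M) - t + i ∈ S := by
  refine ⟨fun hf i hi => ?_, fun hf => mem_ideal_of_forall_single_mem fun i hi => ?_⟩
  · rw [Submodule.mem_colon_singleton, Ideal.mem_span_singleton, smul_eq_mul, mul_comm] at hf
    obtain ⟨g, hg⟩ := hf
    by_contra hst
    refine hi ?_
    have hcoeff := DFunLike.congr_fun (congrArg coeff hg) (s + i)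
    rw [coeff_single_mul_add, coeff_single_mul_of_forall_add_ne, one_mul] at hcoeff
    · exact hcoeff
    · rintro j hj
      have hij : (s : M) - t + i = j := by
        rw [sub_add_eq_add_sub, ← AddSubmonoid.coe_add, ← hj, AddSubmonoid.coe_add,
          add_sub_cancel_left]
      exact hst (hij ▸ j.2)
  · rw [Submodule.mem_colon_singleton, Ideal.mem_span_singleton]
    refine ⟨single ⟨_, hf i hi⟩ 1, ?_⟩
    rw [smul_eq_mul, single_mul_single, single_mul_single]
    congr 1
    ext1
    push_cast
    abel

variable {k : Type*} [CommRing k] {n : ℕ} {S : AddSubmonoid (Fin n → ℤ)} {F : Set (Fin n → ℤ)}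

instance isDomain_addMonoidAlgebra [IsDomain k] : IsDomain (AddMonoidAlgebra k S) :=
  have : TwoUniqueSums S := .of_injective_addHom S.subtype.toAddHom Subtype.val_injective
    inferInstance
  have : NoZeroDivisors (AddMonoidAlgebra k S) := inferInstance
  NoZeroDivisors.to_isDomain _

theorem isNoetherianRing_addMonoidAlgebra [IsNoetherianRing k] (hS : S.FG) :
    IsNoetherianRing (AddMonoidAlgebra k S) :=
  have := (AddMonoid.fg_iff_addSubmonoid_fg S).2 hS
  Algebra.FiniteType.isNoetherianRing k _

open Classical in
/-- The projection of `k[S]` onto the monomials of a face. -/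
def faceProj (k : Type*) [CommRing k] (hF : IsFaceOfSemigroup S F) :
    AddMonoidAlgebra k S →ₐ[k] AddMonoidAlgebra k S :=
  AddMonoidAlgebra.lift k _ S
    { toFun := fun s => if (s.toAdd : Fin n → ℤ) ∈ F then single s.toAdd 1 else 0
      map_one' := by simp [hF.2.1, one_def]
      map_mul' := fun a b => by
        have h := hF.2.2 _ a.toAdd.2 _ b.toAdd.2
        by_cases ha : (a.toAdd : Fin n → ℤ) ∈ F <;> by_cases hb : (b.toAdd : Fin n → ℤ) ∈ F <;>
          simp [h, ha, hb, single_mul_single] }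

open Classical in
theorem coeff_faceProj (hF : IsFaceOfSemigroup S F) (f : AddMonoidAlgebra k S) (s : S) :
    (faceProj k hF f).coeff s = if (s : Fin n → ℤ) ∈ F then f.coeff s else 0 := by
  induction f using AddMonoidAlgebra.induction_linear with
  | zero => simp
  | add f g hf hg => simp only [map_add, coeff_add, Finsupp.add_apply, hf, hg, ite_add_zero]
  | single t c =>
    obtain rfl | hts := eq_or_ne t s
    · by_cases ht : (t : Fin n → ℤ) ∈ F <;> simp [faceProj, lift_single, ht]
    · by_cases ht : (t : Fin n → ℤ) ∈ F <;> simp [faceProj, lift_single, ht, hts]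

/-- The ideal of `k[S]` spanned by the monomials outside a face. -/
def faceIdeal (k : Type*) [CommRing k] (hF : IsFaceOfSemigroup S F) :
    Ideal (AddMonoidAlgebra k S) :=
  RingHom.ker (faceProj k hF)

instance isPrime_faceIdeal [IsDomain k] (hF : IsFaceOfSemigroup S F) : (faceIdeal k hF).IsPrime :=
  RingHom.ker_isPrime _

theorem mem_faceIdeal_iff (hF : IsFaceOfSemigroup S F) {f : AddMonoidAlgebra k S} :
    f ∈ faceIdeal k hF ↔ ∀ s : S, (s : Fin n → ℤ) ∈ F → f.coeff s = 0 := by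
  simp [faceIdeal, RingHom.mem_ker, AddMonoidAlgebra.ext_iff, Finsupp.ext_iff, coeff_faceProj]

theorem single_one_mem_faceIdeal_iff [Nontrivial k] (hF : IsFaceOfSemigroup S F) {s : S} :
    single s (1 : k) ∈ faceIdeal k hF ↔ (s : Fin n → ℤ) ∉ F := by
  simp only [mem_faceIdeal_iff, coeff_single, Finsupp.single_apply_eq_zero, one_ne_zero]
  exact ⟨fun h hs => h s hs rfl, fun hs t ht hts => hs (hts ▸ ht)⟩

theorem faceIdeal_le_iff [Nontrivial k] (hF : IsFaceOfSemigroup S F)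
    {J : Ideal (AddMonoidAlgebra k S)} :
    faceIdeal k hF ≤ J ↔ ∀ s : S, (s : Fin n → ℤ) ∉ F → single s (1 : k) ∈ J :=
  ⟨fun h _ hs => h ((single_one_mem_faceIdeal_iff hF).2 hs), fun h _ hf =>
    mem_ideal_of_forall_single_mem fun s hs => h s (mt ((mem_faceIdeal_iff hF).1 hf s) hs)⟩

theorem sgMaxIdealZ_le_faceIdeal {k : Type*} [Field k] (h0 : IsFaceOfSemigroup S {0}) :
    sgMaxIdealZ k S ≤ faceIdeal k h0 := by
  rw [sgMaxIdealZ, Ideal.span_le]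
  rintro _ ⟨s, hs, rfl⟩
  exact (single_one_mem_faceIdeal_iff h0).2 (by simpa using hs)

theorem isFaceOfSemigroup_setOf_single_notMem (p : Ideal (AddMonoidAlgebra k S)) [p.IsPrime] :
    IsFaceOfSemigroup S {a | ∃ h : a ∈ S, single (⟨a, h⟩ : S) (1 : k) ∉ p} := by
  refine ⟨fun a ha => ha.1, ⟨S.zero_mem, p.one_notMem⟩, fun a ha b hb => ?_⟩
  have hab : single (⟨a + b, S.add_mem ha hb⟩ : S) (1 : k) =
      single (⟨a, ha⟩ : S) 1 * single (⟨b, hb⟩ : S) 1 := by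
    rw [single_mul_single, mul_one]
    rfl
  simp only [Set.mem_ofPred_eq, ha, hb, S.add_mem ha hb, exists_true_left, hab,
    ‹p.IsPrime›.mul_mem_iff_mem_or_mem, not_or]

/- The monomials outside a prime `p` form a face, and a facet `F` containing it satisfies
`0 ≠ faceIdeal k F ≤ p`, so that `p` is `faceIdeal k F`. -/
theorem exists_facet_of_height_le_one [IsDomain k] (hS : S.FG)
    {p : Ideal (AddMonoidAlgebra k S)} [p.IsPrime] (hp : p.height ≤ 1) {t : S}
    (ht : single t (1 : k) ∈ p) :
    ∃ F, ∃ hF : IsFaceOfSemigroup S F, zdim F + 1 = zdim (S : Set (Fin n → ℤ)) ∧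
      p = faceIdeal k hF := by
  obtain ⟨F, hF, hpF, hFS, hdim⟩ := (isFaceOfSemigroup_setOf_single_notMem p).exists_facet hS
    fun h => (h.ge t.2).2 ht
  refine ⟨F, hF, hdim, (eq_of_le_of_height_le_one (fun h => ?_) ?_ hp).symm⟩
  · obtain ⟨s, hs, hsF⟩ := Set.exists_of_ssubset (hF.1.ssubset_of_ne hFS)
    have hmem := (single_one_mem_faceIdeal_iff (k := k) hF (s := ⟨s, hs⟩)).2 hsF
    rw [h, Ideal.mem_bot, single_eq_zero] at hmem
    exact one_ne_zero hmem
  · rw [faceIdeal_le_iff]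
    exact fun s hs => by_contra fun hsp => hs (hpF ⟨s.2, hsp⟩)

theorem exists_facet_forall_add_notMem {k : Type*} [Field k] (hS : S.FG)
    (hpointed : ∀ a ∈ S, -a ∈ S → a = 0) (hCM : IsCMWrt (sgMaxIdealZ k S)) {u : Fin n → ℤ}
    (hu : u ∈ AddSubgroup.closure (S : Set (Fin n → ℤ))) (huS : u ∉ S) :
    ∃ F, IsFaceOfSemigroup S F ∧ zdim F + 1 = zdim (S : Set (Fin n → ℤ)) ∧
      ∀ z ∈ AddSubgroup.closure F, u + z ∉ S := by
  have := isNoetherianRing_addMonoidAlgebra (k := k) hS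
  have h0 := isFaceOfSemigroup_zero hpointed
  obtain ⟨s, hs, t, ht, rfl⟩ := exists_eq_sub_of_mem_closure hu
  lift s to S using hs
  lift t to S using ht
  have ht0 : single t (1 : k) ≠ 0 := single_eq_zero.not.2 one_ne_zero
  have hcolon : (Ideal.span {single t (1 : k)}).colon {single s 1} ≤ faceIdeal k h0 := by
    refine fun f hf => (mem_faceIdeal_iff h0).2 fun i hi => by_contra fun hfi => huS ?_
    rw [← add_zero ((s : Fin n → ℤ) - t), ← Set.mem_singleton_iff.1 hi]
    exact mem_colon_single_iff.1 hf i hfi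
  obtain ⟨p, hp, hheight, hle⟩ := hCM.exists_isPrime_height_le_one (sgMaxIdealZ_le_faceIdeal h0)
    (fun _ _ => mul_left_cancel₀ ht0) hcolon
  have hsingle {i : S} (hi : (s : Fin n → ℤ) - t + i ∈ S) : single i (1 : k) ∈ p := by
    refine hle (mem_colon_single_iff.2 fun j hj => ?_)
    rw [coeff_single, Finsupp.single_apply_ne_zero] at hj
    exact hj.1 ▸ hi
  obtain ⟨F, hF, hdim, rfl⟩ := exists_facet_of_height_le_one hS hheight
    (hsingle (i := t) (by rw [sub_add_cancel]; exact s.2))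
  refine ⟨F, hF, hdim, fun z hz hzS => ?_⟩
  obtain ⟨a, ha, b, hb, rfl⟩ := exists_eq_sub_of_mem_closure (N := hF.toAddSubmonoid) hz
  refine (single_one_mem_faceIdeal_iff hF).1 (hsingle (i := ⟨a, hF.1 ha⟩) ?_) ha
  simpa [add_assoc] using S.add_mem hzS (hF.1 hb)

end SemigroupRing

theorem hole_avoids_facet_general (k : Type*) [Field k] {n : ℕ} (S : AddSubmonoid (Fin n → ℤ))
    (hS : S.FG) (hpointed : ∀ a ∈ S, -a ∈ S → a = 0) (hCM : IsCMWrt (sgMaxIdealZ k S))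
    {u : Fin n → ℤ} (hu : u ∈ AddSubgroup.closure (S : Set (Fin n → ℤ))) (huS : u ∉ S) :
    (∃ F, IsFaceOfSemigroup S F ∧ zdim F + 1 = zdim (S : Set (Fin n → ℤ)) ∧
      ∀ z ∈ AddSubgroup.closure F, u + z ∉ S) ∧
    ∃ l, IsFaceOfSemigroup S l ∧ zdim l = 1 ∧ ∃ a ∈ l, u + a ∉ S := by
  refine ⟨exists_facet_forall_add_notMem hS hpointed hCM hu huS, ?_⟩
  have hS0 : ({0} : Set (Fin n → ℤ)) ≠ S := fun h => huS <| by
    rw [← h, AddSubgroup.closure_singleton_zero, AddSubgroup.mem_bot] at hu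
    exact hu ▸ S.zero_mem
  obtain ⟨l, hl, -, hdim⟩ := (isFaceOfSemigroup_zero hpointed).exists_zdim_eq_add_one hS hS0
  exact ⟨l, hl, by rw [hdim, zdim_zero], 0, hl.2.1, by rwa [add_zero]⟩

/-- from the proof of Theorem 4.3, via Katthän's theorems: let `S` be
a pointed affine semigroup of dimension `d` with `k[S]` Cohen-Macaulay, and let
`v, v' ∈ ℤS` with `v' - v ∈ S̄ \ S` a hole.  Then there is a facet `F` of `S` with
`((v'-v) + ℤF) ∩ S = ∅`; in particular there are an extremal ray `l` of `S` and
`a ∈ l` with `(v'-v) + a ∉ S`. -/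
theorem hole_avoids_facet (k : Type*) [Field k] {n d : ℕ}
    (S : AddSubmonoid (Fin n → ℤ))
    -- `S` is a pointed affine semigroup of dimension `d`:
    (hfg : ∃ G : Finset (Fin n → ℤ), AddSubmonoid.closure ↑G = S)
    (hpointed : ∀ a ∈ S, -a ∈ S → a = 0)
    (hdim : zdim (S : Set (Fin n → ℤ)) = d)
    -- `k[S]` is Cohen-Macaulay:
    (hCM : IsCMWrt (sgMaxIdealZ k S))
    -- `v, v' ∈ ℤS` and `v' - v` is a hole, i.e. lies in `S̄ = ℤS ∩ ℝ≥0·S` but not in `S`: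
    (v v' : Fin n → ℤ)
    (hv : v ∈ AddSubgroup.closure (S : Set (Fin n → ℤ)))
    (hv' : v' ∈ AddSubgroup.closure (S : Set (Fin n → ℤ)))
    (hcone : ∃ m : ℕ, 0 < m ∧ m • (v' - v) ∈ S)
    (hZS : v' - v ∈ AddSubgroup.closure (S : Set (Fin n → ℤ)))
    (hnotS : v' - v ∉ S) :
    (∃ F : Set (Fin n → ℤ), IsFaceOfSemigroup S F ∧ zdim F = d - 1 ∧
      ∀ z ∈ AddSubgroup.closure F, v' - v + z ∉ S) ∧
    (∃ l : Set (Fin n → ℤ), IsFaceOfSemigroup S l ∧ zdim l = 1 ∧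
      ∃ a ∈ l, v' - v + a ∉ S) := by
  obtain ⟨⟨F, hF, hFdim, hFz⟩, hl⟩ := hole_avoids_facet_general k S hfg hpointed hCM hZS hnotS
  exact ⟨⟨F, hF, by omega, hFz⟩, hl⟩

end
end
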